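/- arXiv:0708.0433 — 3 statements merged into one kernel-verified Lean document; each statement's English description precedes it below -/
import Mathlib

section
/- Let m ≥ 1 and define g : ℝ² ⊃ {(x,y) : x+y ≠ 0} → ℝ by g(x,y) = sinh((x+y)/2)/sinh(3(x+y)/2) − sinh((x−y)/2)/sinh(3(x−y)/2) for x ≠ y, and g(x,x) = sinh(x)/sinh(3x) − 1/3. For ξ = (ξ_1,...,ξ_m) with 0 < ξ_1 < ... < ξ_m, set G(ξ) = det_m[g(ξ_j,ξ_k)] / (∏_{k=1}^m ξ_k² · ∏_{1≤i<j≤m}(ξ_j²−ξ_i²)²). Then G(ξ) tends, as ξ → 0 within this domain, to L_m = [∏_{1≤i<j≤2m} 3(j−i)] · [∏_{i=1}^{2m+1} ∏_{j=1}^{m} (1+3(2j−i))] / [(2m)! · ∏_{1≤i<j≤m}(j²−i²) · ∏_{m+1≤i<j≤2m}(j²−i²) · ∏_{i=1}^{m}∏_{j=1}^{m} 9(m+j−i)(m+j+i)]. -/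
open Finset Filter

open scoped Classical in
/-- The kernel `g(x,y) = sinh((x+y)/2)/sinh(3(x+y)/2) − sinh((x−y)/2)/sinh(3(x−y)/2)`
with the continuous extension `g(x,x) = sinh(x)/sinh(3x) − 1/3` on the diagonal. -/
noncomputable def gKer (x y : ℝ) : ℝ :=
  if x = y then Real.sinh x / Real.sinh (3 * x) - 1 / 3
  else Real.sinh ((x + y) / 2) / Real.sinh (3 * (x + y) / 2) -
       Real.sinh ((x - y) / 2) / Real.sinh (3 * (x - y) / 2)

/-!
With the even analytic function `F u = sinh (u / 2) / sinh (3 * u / 2)`, the kernel is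
`g x y = F (x + y) - F (x - y)`, which is `x * y` times a power series in `x ^ 2` and `y ^ 2`.
Expanding the powers in Newton polynomials takes both Vandermonde determinants out of the
determinant of such a series; what is left is a matrix of divided differences, which tends to the
matrix of Taylor coefficients `2 * F^(2 * i + 2 * j + 2)(0) / ((2 * i + 1)! * (2 * j + 1)!)`.

Up to scaling of rows and columns this is a Hankel matrix. The differential equation of `F` yields
functions `f 0 = F`, `f 0' = f 1`, `f (n + 1)' = f (n + 2) + b n * f n` for explicit `b`, all of
which vanish at `0` except `f 0`. Hence the derivatives of `F` at `0` are `F 0` times the sums over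
Dyck paths weighted by `b`, and cutting the paths in the middle factorizes the Hankel matrix as
`L * D * Lᵀ` with `L` unitriangular and `D` diagonal with products of the `b n` as entries.
-/

section DyckPaths

/-- The weighted count of the Dyck path prefixes of length `k` from height `0` to height `n`, a
down-step from height `h + 1` having weight `b h` and an up-step weight `1`. For `n = 0` these are
the moments of the monic orthogonal polynomials with recurrence `X p_(n+1) = p_(n+2) + b n p_n`. -/
def dyckSum {R : Type*} [CommSemiring R] (b : ℕ → R) : ℕ → ℕ → R
  | 0, 0 => 1
  | 0, _ + 1 => 0
  | k + 1, 0 => b 0 * dyckSum b k 1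
  | k + 1, n + 1 => dyckSum b k n + b (n + 1) * dyckSum b k (n + 2)

/-- The weight of the straight descent from height `n` to height `0`; it is the squared norm of the
`n`-th orthogonal polynomial. -/
def descentWeight {R : Type*} [CommSemiring R] (b : ℕ → R) (n : ℕ) : R := ∏ i ∈ range n, b i

section CommSemiring

variable {R : Type*} [CommSemiring R] (b : ℕ → R)

lemma descentWeight_zero : descentWeight b 0 = 1 := prod_range_zero b

lemma descentWeight_succ (n : ℕ) : descentWeight b (n + 1) = descentWeight b n * b n :=
  prod_range_succ b n

lemma dyckSum_eq_zero_of_lt {k n : ℕ} (h : k < n) : dyckSum b k n = 0 := by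
  induction k generalizing n with
  | zero =>
    obtain ⟨n, rfl⟩ := Nat.exists_eq_add_of_lt h
    rfl
  | succ k ih =>
    obtain ⟨n, rfl⟩ := Nat.exists_eq_succ_of_ne_zero (Nat.ne_zero_of_lt h)
    rw [dyckSum, ih (by omega), ih (by omega), mul_zero, add_zero]

lemma dyckSum_self (k : ℕ) : dyckSum b k k = 1 := by
  induction k with
  | zero => rfl
  | succ k ih => rw [dyckSum, ih, dyckSum_eq_zero_of_lt b (by omega), mul_zero, add_zero]

lemma dyckSum_eq_zero_of_odd {k n : ℕ} (h : Odd (k + n)) : dyckSum b k n = 0 := by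
  induction k generalizing n with
  | zero =>
    cases n with
    | zero => exact absurd h (by decide)
    | succ n => rfl
  | succ k ih =>
    rw [Nat.odd_iff] at h
    cases n with
    | zero => rw [dyckSum, ih (by rw [Nat.odd_iff]; omega), mul_zero]
    | succ n =>
      rw [dyckSum, ih (by rw [Nat.odd_iff]; omega), ih (by rw [Nat.odd_iff]; omega), mul_zero,
        add_zero]

lemma sum_dyckSum_succ_mul (k : ℕ) (c : ℕ → R) (N : ℕ) :
    ∑ n ∈ range (N + 1), dyckSum b (k + 1) n * c n * descentWeight b n =
      ∑ n ∈ range N, dyckSum b k n * c (n + 1) * descentWeight b (n + 1) +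
        ∑ n ∈ range (N + 1), dyckSum b k (n + 1) * c n * descentWeight b (n + 1) := by
  induction N with
  | zero =>
    simp only [zero_add, sum_range_one, sum_range_zero, dyckSum, descentWeight_zero,
      descentWeight_succ]
    ring
  | succ N ih =>
    rw [sum_range_succ, ih,
      sum_range_succ (fun n => dyckSum b k n * c (n + 1) * descentWeight b (n + 1)) N,
      sum_range_succ (fun n => dyckSum b k (n + 1) * c n * descentWeight b (n + 1)) (N + 1),
      descentWeight_succ b (N + 1), dyckSum]
    ring

-- The Jacobi matrix is self-adjoint for the inner product with weights `descentWeight b`.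
lemma sum_dyckSum_succ_mul_dyckSum {j k N : ℕ} (hj : j ≤ N) (hk : k ≤ N) :
    ∑ n ∈ range (N + 1), dyckSum b (j + 1) n * dyckSum b k n * descentWeight b n =
      ∑ n ∈ range (N + 1), dyckSum b j n * dyckSum b (k + 1) n * descentWeight b n := by
  simp only [mul_comm (dyckSum b j _) (dyckSum b (k + 1) _)]
  rw [sum_dyckSum_succ_mul, sum_dyckSum_succ_mul, sum_range_succ _ N, sum_range_succ _ N,
    dyckSum_eq_zero_of_lt b (Nat.lt_succ_of_le hj), dyckSum_eq_zero_of_lt b (Nat.lt_succ_of_le hk)]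
  simp only [mul_comm (dyckSum b j _) (dyckSum b k _)]
  ring

-- A Dyck path of length `j + k` is cut after `j` steps, and its second half is read backwards.
lemma dyckSum_add_zero {j k N : ℕ} (h : j + k ≤ N) :
    dyckSum b (j + k) 0 =
      ∑ n ∈ range (N + 1), dyckSum b j n * dyckSum b k n * descentWeight b n := by
  induction j generalizing k with
  | zero => simp [sum_range_succ', dyckSum, descentWeight_zero]
  | succ j ih =>
    rw [sum_dyckSum_succ_mul_dyckSum b (by omega) (by omega), ← ih (by omega),
      Nat.succ_add_eq_add_succ]

lemma dyckSum_odd_add_odd {m : ℕ} (i j : Fin m) :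
    dyckSum b ((2 * i + 1) + (2 * j + 1)) 0 =
      ∑ l : Fin m, dyckSum b (2 * i + 1) (2 * l + 1) * dyckSum b (2 * j + 1) (2 * l + 1) *
        descentWeight b (2 * l + 1) := by
  rw [dyckSum_add_zero b (N := 4 * m) (by omega)]
  symm
  refine sum_of_injOn (fun l : Fin m => 2 * (l : ℕ) + 1) (fun l _ l' _ h => by grind)
    (fun l _ => by grind) (fun n _ hn => ?_) fun _ _ => rfl
  rcases Nat.even_or_odd' n with ⟨l, rfl | rfl⟩
  · rw [dyckSum_eq_zero_of_odd b (n := 2 * l) (by rw [Nat.odd_iff]; omega), zero_mul, zero_mul]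
  · have hl : m ≤ l := not_lt.1 fun hl => hn ⟨⟨l, hl⟩, mem_coe.2 (mem_univ _), rfl⟩
    rw [dyckSum_eq_zero_of_lt b (by omega), zero_mul, zero_mul]

end CommSemiring

theorem det_dyckSum_odd_add_odd {R : Type*} [CommRing R] (b : ℕ → R) (m : ℕ) :
    (Matrix.of fun i j : Fin m => dyckSum b ((2 * i + 1) + (2 * j + 1)) 0).det =
      ∏ i : Fin m, descentWeight b (2 * i + 1) := by
  set L : Matrix (Fin m) (Fin m) R := Matrix.of fun i l => dyckSum b (2 * i + 1) (2 * l + 1)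
  have hL : L.det = 1 := by
    have hlower : L.IsLowerTriangular := fun i j (hij : i < j) =>
      dyckSum_eq_zero_of_lt b (by omega)
    rw [Matrix.det_of_isLowerTriangular L hlower]
    exact prod_eq_one fun i _ => dyckSum_self b _
  have hfactor : (Matrix.of fun i j : Fin m => dyckSum b ((2 * i + 1) + (2 * j + 1)) 0) =
      L * Matrix.diagonal (fun l : Fin m => descentWeight b (2 * l + 1)) * L.transpose := by
    ext i j
    rw [Matrix.mul_apply, Matrix.of_apply, dyckSum_odd_add_odd]
    simp only [Matrix.mul_diagonal, Matrix.transpose_apply, Matrix.of_apply, L]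
    exact sum_congr rfl fun l _ => mul_right_comm _ _ _
  rw [hfactor, Matrix.det_mul, Matrix.det_mul, Matrix.det_transpose, Matrix.det_diagonal, hL,
    one_mul, mul_one]

end DyckPaths

section DividedDifferences

/-- The divided difference of `X ^ p` at the nodes `s 0, …, s i`, which is the complete homogeneous
symmetric polynomial of degree `p - i` in these nodes (and `0` for `p < i`). It is the coefficient
of `X ^ p` on the Newton polynomial `Lagrange.nodal (range i) s`. -/
def divDiffPow {R : Type*} [CommSemiring R] (s : ℕ → R) : ℕ → ℕ → R
  | 0, 0 => 1
  | _ + 1, 0 => 0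
  | 0, p + 1 => s 0 * divDiffPow s 0 p
  | i + 1, p + 1 => divDiffPow s i p + s (i + 1) * divDiffPow s (i + 1) p

section CommRing

variable {R : Type*} [CommRing R] (s : ℕ → R)

lemma eval_nodal_range_succ (i : ℕ) (x : R) :
    (Lagrange.nodal (range (i + 1)) s).eval x =
      (Lagrange.nodal (range i) s).eval x * (x - s i) := by
  simp only [Lagrange.eval_nodal, prod_range_succ]

lemma mul_sum_divDiffPow_mul_eval_nodal (x : R) (p m : ℕ) :
    x * ∑ i ∈ range (m + 1), divDiffPow s i p * (Lagrange.nodal (range i) s).eval x =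
      ∑ i ∈ range (m + 1), divDiffPow s i (p + 1) * (Lagrange.nodal (range i) s).eval x +
        divDiffPow s m p * (Lagrange.nodal (range (m + 1)) s).eval x := by
  induction m with
  | zero =>
    simp only [zero_add, sum_range_one, divDiffPow, Lagrange.eval_nodal, prod_range_one,
      prod_range_zero]
    ring
  | succ m ih =>
    rw [sum_range_succ, mul_add, ih, sum_range_succ _ (m + 1), eval_nodal_range_succ s (m + 1),
      divDiffPow]
    ring

lemma pow_eq_sum_divDiffPow_mul_eval_nodal {j m : ℕ} (hj : j < m) (p : ℕ) :
    s j ^ p = ∑ i : Fin m, divDiffPow s i p * (Lagrange.nodal (range i) s).eval (s j) := by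
  obtain ⟨m, rfl⟩ := Nat.exists_eq_succ_of_ne_zero (Nat.ne_zero_of_lt hj)
  rw [Fin.sum_univ_eq_sum_range
    (fun i => divDiffPow s i p * (Lagrange.nodal (range i) s).eval (s j))]
  induction p with
  | zero => simp [sum_range_succ', divDiffPow]
  | succ p ih =>
    rw [pow_succ', ih, mul_sum_divDiffPow_mul_eval_nodal,
      Lagrange.eval_nodal_at_node (mem_range.2 hj), mul_zero, add_zero]

/-- The matrix of values at the nodes of the Newton polynomials. -/
noncomputable def newtonMatrix (m : ℕ) : Matrix (Fin m) (Fin m) R :=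
  Matrix.of fun j i => (Lagrange.nodal (range i) s).eval (s j)

lemma det_newtonMatrix [Nontrivial R] (m : ℕ) :
    (newtonMatrix s m).det = (Matrix.vandermonde fun j : Fin m => s j).det :=
  (Matrix.det_eval_matrixOfPolynomials_eq_det_vandermonde _ _
    (fun _ => Lagrange.natDegree_nodal.trans (card_range _)) fun _ => Lagrange.nodal_monic).symm

end CommRing

lemma norm_divDiffPow_le {R : Type*} [NormedCommRing R] [NormOneClass R] {s : ℕ → R} {r : ℝ}
    {i : ℕ} (hr : 0 < r) (hs : ∀ n ≤ i, ‖s n‖ ≤ r) (p : ℕ) :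
    ‖divDiffPow s i p‖ ≤ r⁻¹ ^ i * (2 * r) ^ p := by
  induction p generalizing i with
  | zero =>
    cases i with
    | zero => simp only [divDiffPow, norm_one, pow_zero, mul_one, le_refl]
    | succ i =>
      rw [divDiffPow, norm_zero]
      positivity
  | succ p ih =>
    have hstep : ‖s i * divDiffPow s i p‖ ≤ r * (r⁻¹ ^ i * (2 * r) ^ p) :=
      (norm_mul_le _ _).trans
        (mul_le_mul (hs i le_rfl) (ih hs) (norm_nonneg _) hr.le)
    have htarget : r⁻¹ ^ i * (2 * r) ^ (p + 1) = 2 * (r * (r⁻¹ ^ i * (2 * r) ^ p)) := by ring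
    have hpos : 0 ≤ r * (r⁻¹ ^ i * (2 * r) ^ p) := by positivity
    rw [htarget, two_mul]
    cases i with
    | zero => exact hstep.trans (le_add_of_nonneg_left hpos)
    | succ i =>
      have hlower : ‖divDiffPow s i p‖ ≤ r * (r⁻¹ ^ (i + 1) * (2 * r) ^ p) := by
        convert ih fun n hn => hs n (hn.trans i.le_succ) using 1
        rw [pow_succ]
        field_simp
      exact (norm_add_le _ _).trans (add_le_add hlower hstep)

lemma tendsto_divDiffPow {R α : Type*} [CommSemiring R] [TopologicalSpace R]
    [IsTopologicalSemiring R] {l : Filter α} {s : α → ℕ → R}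
    (hs : ∀ n, Tendsto (fun a => s a n) l (nhds 0)) (i p : ℕ) :
    Tendsto (fun a => divDiffPow (s a) i p) l (nhds (if i = p then 1 else 0)) := by
  induction p generalizing i with
  | zero => cases i <;> simpa [divDiffPow] using tendsto_const_nhds
  | succ p ih =>
    cases i with
    | zero => simpa [divDiffPow] using (hs 0).mul (ih 0)
    | succ i => simpa [divDiffPow] using (ih i).add ((hs (i + 1)).mul (ih (i + 1)))

end DividedDifferences

section ConfluentLimit

variable {𝕜 : Type*} [NormedField 𝕜] {K : ℕ → ℕ → 𝕜} {C ρ : ℝ}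

lemma eventually_norm_le {E α : Type*} [SeminormedAddCommGroup E] {l : Filter α}
    {s : α → ℕ → E} {r : ℝ} (hr : 0 < r) (hs : ∀ n, Tendsto (fun a => s a n) l (nhds 0)) (i : ℕ) :
    ∀ᶠ a in l, ∀ n ≤ i, ‖s a n‖ ≤ r :=
  (Set.finite_Iic i).eventually_all.2 fun n _ =>
    (tendsto_zero_iff_norm_tendsto_zero.1 (hs n)).eventually_le_const hr

lemma norm_mul_mul_le_geometric (hK : ∀ p q, ‖K p q‖ ≤ C * ρ ^ (p + q)) {u v : ℕ → 𝕜}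
    {A B δ : ℝ} (hu : ∀ p, ‖u p‖ ≤ A * δ ^ p) (hv : ∀ q, ‖v q‖ ≤ B * δ ^ q) (p q : ℕ) :
    ‖K p q * u p * v q‖ ≤ C * A * B * ((δ * ρ) ^ p * (δ * ρ) ^ q) := by
  have hK0 : 0 ≤ C * ρ ^ (p + q) := (norm_nonneg _).trans (hK p q)
  have hu0 : 0 ≤ A * δ ^ p := (norm_nonneg _).trans (hu p)
  calc ‖K p q * u p * v q‖ = ‖K p q‖ * ‖u p‖ * ‖v q‖ := by rw [norm_mul, norm_mul]
    _ ≤ C * ρ ^ (p + q) * (A * δ ^ p) * (B * δ ^ q) := by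
      gcongr
      exacts [hK p q, hu p, hv q]
    _ = C * A * B * ((δ * ρ) ^ p * (δ * ρ) ^ q) := by ring

lemma summable_mul_geometric_prod (D : ℝ) {θ : ℝ} (h0 : 0 ≤ θ) (h1 : θ < 1) :
    Summable fun z : ℕ × ℕ => D * (θ ^ z.1 * θ ^ z.2) :=
  have hθ := summable_geometric_of_lt_one h0 h1
  (hθ.mul_of_nonneg hθ (fun _ => pow_nonneg h0 _) fun _ => pow_nonneg h0 _).mul_left D

/-- The iterated divided difference at `s 0, …, s i` and `t 0, …, t j` of the kernel with power
series `∑ K p q x ^ p y ^ q`. -/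
noncomputable def divDiffKernel (K : ℕ → ℕ → 𝕜) (s t : ℕ → 𝕜) (i j : ℕ) : 𝕜 :=
  ∑' z : ℕ × ℕ, K z.1 z.2 * divDiffPow s i z.1 * divDiffPow t j z.2

lemma eq_newtonMatrix_mul_mul_transpose {s t : ℕ → 𝕜} {m : ℕ} {M : Matrix (Fin m) (Fin m) 𝕜}
    (hD : ∀ i j : Fin m, HasSum
      (fun z : ℕ × ℕ => K z.1 z.2 * divDiffPow s i z.1 * divDiffPow t j z.2)
      (divDiffKernel K s t i j))
    (hM : ∀ i j : Fin m, HasSum (fun z : ℕ × ℕ => K z.1 z.2 * s i ^ z.1 * t j ^ z.2) (M i j)) :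
    M = newtonMatrix s m * (Matrix.of fun i j : Fin m => divDiffKernel K s t i j) *
      (newtonMatrix t m).transpose := by
  ext i j
  have hsum := hasSum_sum fun b (_ : b ∈ univ) => hasSum_sum fun a (_ : a ∈ univ) =>
    ((hD a b).mul_left (newtonMatrix s m i a)).mul_right (newtonMatrix t m j b)
  have hexpand (z : ℕ × ℕ) : K z.1 z.2 * s i ^ z.1 * t j ^ z.2 = ∑ b : Fin m, ∑ a : Fin m,
      newtonMatrix s m i a * (K z.1 z.2 * divDiffPow s a z.1 * divDiffPow t b z.2) *
        newtonMatrix t m j b := by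
    rw [pow_eq_sum_divDiffPow_mul_eval_nodal s i.2, pow_eq_sum_divDiffPow_mul_eval_nodal t j.2,
      mul_sum]
    refine sum_congr rfl fun b _ => ?_
    rw [mul_sum, sum_mul]
    refine sum_congr rfl fun a _ => ?_
    simp only [newtonMatrix, Matrix.of_apply]
    ring
  rw [← funext hexpand] at hsum
  simpa only [Matrix.mul_apply, Matrix.transpose_apply, Matrix.of_apply, sum_mul] using
    (hM i j).unique hsum

lemma tendsto_extend_val {α : Type*} {l : Filter α} {m : ℕ} {x : α → Fin m → 𝕜}
    (hx : Tendsto x l (nhds 0)) (n : ℕ) :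
    Tendsto (fun a => Function.extend Fin.val (x a) (0 : ℕ → 𝕜) n) l (nhds 0) := by
  by_cases hn : n < m
  · exact (tendsto_pi_nhds.1 hx ⟨n, hn⟩).congr fun a =>
      (Fin.val_injective.extend_apply (x a) 0 ⟨n, hn⟩).symm
  · have hrange : ¬ ∃ i : Fin m, (i : ℕ) = n := fun ⟨i, hi⟩ => hn (hi ▸ i.2)
    exact tendsto_const_nhds.congr fun a => (Function.extend_apply' (x a) (0 : ℕ → 𝕜) n hrange).symm

variable [CompleteSpace 𝕜]

lemma hasSum_divDiffKernel (hK : ∀ p q, ‖K p q‖ ≤ C * ρ ^ (p + q)) (hρ : 0 ≤ ρ) {r : ℝ}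
    (hr : 0 < r) (hrρ : 2 * r * ρ < 1) {s t : ℕ → 𝕜} {i j : ℕ} (hs : ∀ n ≤ i, ‖s n‖ ≤ r)
    (ht : ∀ n ≤ j, ‖t n‖ ≤ r) :
    HasSum (fun z : ℕ × ℕ => K z.1 z.2 * divDiffPow s i z.1 * divDiffPow t j z.2)
      (divDiffKernel K s t i j) :=
  (Summable.of_norm_bounded (summable_mul_geometric_prod _ (by positivity) hrρ) fun z =>
    norm_mul_mul_le_geometric hK (norm_divDiffPow_le hr hs) (norm_divDiffPow_le hr ht)
      z.1 z.2).hasSum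

lemma tendsto_divDiffKernel (hK : ∀ p q, ‖K p q‖ ≤ C * ρ ^ (p + q)) (hρ : 0 ≤ ρ) {r : ℝ}
    (hr : 0 < r) (hrρ : 2 * r * ρ < 1) {α : Type*} {l : Filter α} {s t : α → ℕ → 𝕜}
    (hs : ∀ n, Tendsto (fun a => s a n) l (nhds 0))
    (ht : ∀ n, Tendsto (fun a => t a n) l (nhds 0)) (i j : ℕ) :
    Tendsto (fun a => divDiffKernel K (s a) (t a) i j) l (nhds (K i j)) := by
  have hlim : K i j = ∑' z : ℕ × ℕ,
      K z.1 z.2 * (if i = z.1 then 1 else 0) * (if j = z.2 then 1 else 0) := by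
    rw [tsum_eq_single (i, j) fun z hz => ?_]
    · simp
    · by_cases h : i = z.1
      · simp [show j ≠ z.2 from fun h' => hz (Prod.ext h.symm h'.symm)]
      · simp [h]
  rw [hlim]
  refine tendsto_tsum_of_dominated_convergence
    (summable_mul_geometric_prod (C * r⁻¹ ^ i * r⁻¹ ^ j) (by positivity) hrρ)
    (fun z => (tendsto_const_nhds.mul (tendsto_divDiffPow hs _ _)).mul
      (tendsto_divDiffPow ht _ _)) ?_
  filter_upwards [eventually_norm_le hr hs i, eventually_norm_le hr ht j] with a hsa hta z
  exact norm_mul_mul_le_geometric hK (norm_divDiffPow_le hr hsa) (norm_divDiffPow_le hr hta) _ _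

theorem tendsto_det_div_det_vandermonde (hK : ∀ p q, ‖K p q‖ ≤ C * ρ ^ (p + q)) (hρ : 0 ≤ ρ)
    {α : Type*} {l : Filter α} {m : ℕ} {x y : α → Fin m → 𝕜} (hx : Tendsto x l (nhds 0))
    (hy : Tendsto y l (nhds 0)) (hx_inj : ∀ᶠ a in l, Function.Injective (x a))
    (hy_inj : ∀ᶠ a in l, Function.Injective (y a)) {M : α → Matrix (Fin m) (Fin m) 𝕜}
    (hM : ∀ᶠ a in l, ∀ i j,
      HasSum (fun z : ℕ × ℕ => K z.1 z.2 * x a i ^ z.1 * y a j ^ z.2) (M a i j)) :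
    Tendsto (fun a => (M a).det / ((Matrix.vandermonde (x a)).det * (Matrix.vandermonde (y a)).det))
      l (nhds (Matrix.of fun i j : Fin m => K i j).det) := by
  set s := fun a => Function.extend Fin.val (x a) 0
  set t := fun a => Function.extend Fin.val (y a) 0
  have hsx (a i) : s a (Fin.val i) = x a i := Fin.val_injective.extend_apply _ _ _
  have hty (a i) : t a (Fin.val i) = y a i := Fin.val_injective.extend_apply _ _ _
  have hs := tendsto_extend_val hx
  have ht := tendsto_extend_val hy
  obtain ⟨r, hr, hrρ⟩ : ∃ r : ℝ, 0 < r ∧ 2 * r * ρ < 1 :=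
    ⟨1 / (2 * (ρ + 1)), by positivity, by field_simp; linarith⟩
  have hlim : Tendsto (fun a => (Matrix.of fun i j : Fin m => divDiffKernel K (s a) (t a) i j).det)
      l (nhds (Matrix.of fun i j : Fin m => K i j).det) :=
    (continuous_id.matrix_det.tendsto _).comp <| tendsto_pi_nhds.2 fun i =>
      tendsto_pi_nhds.2 fun j => tendsto_divDiffKernel hK hρ hr hrρ hs ht i j
  refine hlim.congr' ?_
  filter_upwards [hM, hx_inj, hy_inj, eventually_norm_le hr hs m, eventually_norm_le hr ht m]
    with a hMa hxa hya hsa hta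
  have hfactor := eq_newtonMatrix_mul_mul_transpose (s := s a) (t := t a)
    (fun i j => hasSum_divDiffKernel hK hρ hr hrρ (fun n hn => hsa n (hn.trans i.2.le))
      fun n hn => hta n (hn.trans j.2.le))
    (by simpa only [hsx, hty] using hMa)
  have hxne := Matrix.det_vandermonde_ne_zero_iff.2 hxa
  have hyne := Matrix.det_vandermonde_ne_zero_iff.2 hya
  rw [hfactor, Matrix.det_mul, Matrix.det_mul, Matrix.det_transpose, det_newtonMatrix,
    det_newtonMatrix]
  simp only [hsx, hty]
  field_simp

end ConfluentLimit

section MixedTaylor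

variable {𝕜 : Type*} [NontriviallyNormedField 𝕜]

/-- The coefficient of `x ^ p * y ^ q` in the Taylor series at the origin of
`(x, y) ↦ F (x + y)`. -/
noncomputable def mixedTaylorCoeff (F : 𝕜 → 𝕜) (p q : ℕ) : 𝕜 :=
  iteratedDeriv (p + q) F 0 / (p.factorial * q.factorial)

lemma mixedTaylorCoeff_eq_mul_choose [CharZero 𝕜] (F : 𝕜 → 𝕜) (p q : ℕ) :
    mixedTaylorCoeff F p q =
      iteratedDeriv (p + q) F 0 / (p + q).factorial * (p + q).choose p := by
  have hfac (n : ℕ) : (n.factorial : 𝕜) ≠ 0 := Nat.cast_ne_zero.2 n.factorial_ne_zero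
  have := hfac (p + q)
  rw [mixedTaylorCoeff, Nat.cast_add_choose]
  field_simp

lemma norm_mul_choose_le {c : ℕ → 𝕜} {C ρ : ℝ} (hc : ∀ n, ‖c n‖ ≤ C * ρ ^ n) (p q : ℕ) :
    ‖c (p + q) * (p + q).choose p‖ ≤ C * (2 * ρ) ^ (p + q) := by
  have hchoose : ‖((p + q).choose p : 𝕜)‖ ≤ 2 ^ (p + q) :=
    (Nat.norm_cast_le _).trans <| by
      rw [norm_one, mul_one]
      exact_mod_cast Nat.choose_le_two_pow (p + q) p
  calc ‖c (p + q) * (p + q).choose p‖ = ‖c (p + q)‖ * ‖((p + q).choose p : 𝕜)‖ := norm_mul _ _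
    _ ≤ C * ρ ^ (p + q) * 2 ^ (p + q) :=
      mul_le_mul (hc _) hchoose (norm_nonneg _) ((norm_nonneg _).trans (hc _))
    _ = C * (2 * ρ) ^ (p + q) := by ring

lemma hasSum_sum_antidiagonal {E : Type*} [AddCommMonoid E] [TopologicalSpace E]
    [ContinuousAdd E] [RegularSpace E] {f : ℕ × ℕ → E} {a : E} (hf : HasSum f a) :
    HasSum (fun n => ∑ z ∈ antidiagonal n, f z) a :=
  (HasAntidiagonal.sigmaAntidiagonalEquivProd.hasSum_iff.2 hf).sigma
    fun n => Finset.hasSum (antidiagonal n) f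

lemma hasSum_mul_choose_mul_pow_mul_pow [CompleteSpace 𝕜] {c : ℕ → 𝕜} {C ρ δ : ℝ} (hρ : 0 ≤ ρ)
    (hc : ∀ n, ‖c n‖ ≤ C * ρ ^ n) (hδ : δ * (2 * ρ) < 1) {x y S : 𝕜} (hx : ‖x‖ ≤ δ)
    (hy : ‖y‖ ≤ δ) (hS : HasSum (fun n => c n * (x + y) ^ n) S) :
    HasSum (fun z : ℕ × ℕ => c (z.1 + z.2) * (z.1 + z.2).choose z.1 * x ^ z.1 * y ^ z.2) S := by
  have hδ0 : 0 ≤ δ := (norm_nonneg x).trans hx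
  have hpow {w : 𝕜} (hw : ‖w‖ ≤ δ) (n : ℕ) : ‖w ^ n‖ ≤ 1 * δ ^ n := by
    rw [norm_pow, one_mul]
    gcongr
  have hsum : Summable fun z : ℕ × ℕ =>
      c (z.1 + z.2) * (z.1 + z.2).choose z.1 * x ^ z.1 * y ^ z.2 :=
    Summable.of_norm_bounded (summable_mul_geometric_prod _ (by positivity) hδ) fun z =>
      norm_mul_mul_le_geometric (K := fun p q => c (p + q) * (p + q).choose p)
        (norm_mul_choose_le hc) (hpow hx) (hpow hy) z.1 z.2
  have hbinomial (n : ℕ) : c n * (x + y) ^ n = ∑ z ∈ antidiagonal n,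
      c (z.1 + z.2) * (z.1 + z.2).choose z.1 * x ^ z.1 * y ^ z.2 := by
    rw [(Commute.all x y).add_pow', mul_sum]
    refine sum_congr rfl fun z hz => ?_
    rw [mem_antidiagonal.1 hz, nsmul_eq_mul]
    ring
  rw [funext hbinomial] at hS
  rw [hS.unique (hasSum_sum_antidiagonal hsum.hasSum)]
  exact hsum.hasSum

variable [CompleteSpace 𝕜] [CharZero 𝕜] {F : 𝕜 → 𝕜}

lemma exists_norm_iteratedDeriv_div_factorial_le (hF : AnalyticAt 𝕜 F 0) :
    ∃ C ρ : ℝ, 0 ≤ ρ ∧ (∀ n, ‖iteratedDeriv n F 0 / n.factorial‖ ≤ C * ρ ^ n) ∧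
      ∀ᶠ u in nhds 0, HasSum (fun n => iteratedDeriv n F 0 / n.factorial * u ^ n) (F u) := by
  obtain ⟨r, hr⟩ := hF.hasFPowerSeriesAt
  obtain ⟨r', hr'0, hr'⟩ := ENNReal.lt_iff_exists_nnreal_btwn.1 hr.r_pos
  have hr'pos : (0 : ℝ) < r' := by exact_mod_cast hr'0
  obtain ⟨C, -, hC⟩ := FormalMultilinearSeries.norm_mul_pow_le_of_lt_radius _
    (hr'.trans_le hr.r_le)
  refine ⟨C, (r' : ℝ)⁻¹, by positivity, fun n => ?_, ?_⟩
  · rw [inv_pow, ← div_eq_mul_inv, le_div_iff₀ (by positivity)]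
    simpa only [FormalMultilinearSeries.ofScalars_norm] using hC n
  · filter_upwards [hr.eventually_hasSum] with u hu
    simpa [FormalMultilinearSeries.ofScalars_apply_eq, mul_comm] using hu

lemma exists_norm_mixedTaylorCoeff_le (hF : AnalyticAt 𝕜 F 0) :
    ∃ C ρ : ℝ, (∀ p q, ‖mixedTaylorCoeff F p q‖ ≤ C * ρ ^ (p + q)) ∧
      ∀ᶠ z : 𝕜 × 𝕜 in nhds 0, HasSum
        (fun w : ℕ × ℕ => mixedTaylorCoeff F w.1 w.2 * z.1 ^ w.1 * z.2 ^ w.2)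
        (F (z.1 + z.2)) := by
  obtain ⟨C, ρ, hρ, hbound, hsum⟩ := exists_norm_iteratedDeriv_div_factorial_le hF
  simp only [mixedTaylorCoeff_eq_mul_choose]
  refine ⟨C, 2 * ρ, norm_mul_choose_le hbound, ?_⟩
  obtain ⟨δ, hδ, hδρ⟩ : ∃ δ : ℝ, 0 < δ ∧ δ * (2 * ρ) < 1 :=
    ⟨1 / (2 * ρ + 1), by positivity, by field_simp; linarith⟩
  have hadd : Tendsto (fun z : 𝕜 × 𝕜 => z.1 + z.2) (nhds 0) (nhds 0) :=
    (continuous_fst.add continuous_snd).tendsto' _ _ (add_zero 0)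
  filter_upwards [hadd.eventually hsum, Metric.closedBall_mem_nhds (0 : 𝕜 × 𝕜) hδ] with z hz hzδ
  rw [mem_closedBall_zero_iff] at hzδ
  exact hasSum_mul_choose_mul_pow_mul_pow hρ hbound hδρ ((norm_fst_le z).trans hzδ)
    ((norm_snd_le z).trans hzδ) hz

end MixedTaylor

section EvenKernel

lemma hasSum_odd_odd {𝕜 : Type*} [Field 𝕜] [TopologicalSpace 𝕜] [IsTopologicalRing 𝕜]
    {K : ℕ → ℕ → 𝕜} {f : 𝕜 → 𝕜 → 𝕜} {x y : 𝕜}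
    (h : ∀ x' ∈ ({x, -x} : Set 𝕜), ∀ y' ∈ ({y, -y} : Set 𝕜),
      HasSum (fun w : ℕ × ℕ => K w.1 w.2 * x' ^ w.1 * y' ^ w.2) (f x' y')) :
    HasSum (fun w : ℕ × ℕ =>
        4 * K (2 * w.1 + 1) (2 * w.2 + 1) * x ^ (2 * w.1 + 1) * y ^ (2 * w.2 + 1))
      (f x y - f x (-y) - f (-x) y + f (-x) (-y)) := by
  have hinj : Function.Injective fun w : ℕ × ℕ => (2 * w.1 + 1, 2 * w.2 + 1) := by
    rintro ⟨p, q⟩ ⟨p', q'⟩ hw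
    simpa using hw
  have hsum := (((h x (by simp) y (by simp)).sub (h x (by simp) (-y) (by simp))).sub
    (h (-x) (by simp) y (by simp))).add (h (-x) (by simp) (-y) (by simp))
  rw [← hinj.hasSum_iff] at hsum
  · refine (congrArg (HasSum · _) (funext fun w => ?_)).mpr hsum
    simp only [Function.comp_apply, Odd.neg_pow (odd_two_mul_add_one _)]
    ring
  · rintro ⟨p, q⟩ hpq
    rcases Nat.even_or_odd p with hp | ⟨p, rfl⟩
    · simp [hp.neg_pow]
    rcases Nat.even_or_odd q with hq | ⟨q, rfl⟩
    · simp [hq.neg_pow]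
    · exact absurd ⟨(p, q), rfl⟩ hpq

variable {𝕜 : Type*} [NontriviallyNormedField 𝕜] [CompleteSpace 𝕜] [CharZero 𝕜] {F : 𝕜 → 𝕜}

lemma exists_norm_two_mul_mixedTaylorCoeff_odd_odd_le (hF : AnalyticAt 𝕜 F 0)
    (heven : Function.Even F) :
    ∃ C ρ : ℝ, 0 ≤ ρ ∧
      (∀ p q, ‖2 * mixedTaylorCoeff F (2 * p + 1) (2 * q + 1)‖ ≤ C * ρ ^ (p + q)) ∧
      ∀ᶠ z : 𝕜 × 𝕜 in nhds 0, z.1 ≠ 0 → z.2 ≠ 0 → HasSum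
        (fun w : ℕ × ℕ => 2 * mixedTaylorCoeff F (2 * w.1 + 1) (2 * w.2 + 1) *
          (z.1 ^ 2) ^ w.1 * (z.2 ^ 2) ^ w.2)
        ((F (z.1 + z.2) - F (z.1 - z.2)) / (z.1 * z.2)) := by
  obtain ⟨C, ρ, hbound, hsum⟩ := exists_norm_mixedTaylorCoeff_le hF
  refine ⟨‖(2 : 𝕜)‖ * C * ρ ^ 2, ρ ^ 2, by positivity, fun p q => ?_, ?_⟩
  · rw [norm_mul]
    refine (mul_le_mul_of_nonneg_left (hbound _ _) (norm_nonneg _)).trans_eq ?_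
    ring
  have hneg₁ : Tendsto (fun z : 𝕜 × 𝕜 => (-z.1, z.2)) (nhds 0) (nhds 0) :=
    Continuous.tendsto' (by fun_prop) _ _ (by simp)
  have hneg₂ : Tendsto (fun z : 𝕜 × 𝕜 => (z.1, -z.2)) (nhds 0) (nhds 0) :=
    Continuous.tendsto' (by fun_prop) _ _ (by simp)
  filter_upwards [hsum, hneg₁.eventually hsum, hneg₂.eventually hsum,
    hneg₁.eventually (hneg₂.eventually hsum)] with z hpp hnp hpn hnn hx hy
  have hodd := hasSum_odd_odd (K := mixedTaylorCoeff F) (f := fun x y => F (x + y))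
    (x := z.1) (y := z.2) <| by
      rintro _ (rfl | rfl) _ (rfl | rfl)
      exacts [hpp, hpn, hnp, hnn]
  have h₁ : F (-z.1 + z.2) = F (z.1 - z.2) := by rw [← heven, neg_add, neg_neg, ← sub_eq_add_neg]
  have h₂ : F (-z.1 + -z.2) = F (z.1 + z.2) := by rw [← neg_add, heven]
  rw [h₁, h₂, ← sub_eq_add_neg] at hodd
  refine (congrArg₂ HasSum (funext fun w => ?_) ?_).mpr (hodd.mul_right ((2 * (z.1 * z.2))⁻¹))
  · field_simp
    ring
  · field_simp
    ring

theorem tendsto_det_even_kernel (hF : AnalyticAt 𝕜 F 0) (heven : Function.Even F) (m : ℕ) :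
    Tendsto (fun ξ : Fin m → 𝕜 =>
        (Matrix.of fun j k => F (ξ j + ξ k) - F (ξ j - ξ k)).det /
          ((∏ k, ξ k ^ 2) * (Matrix.vandermonde fun k => ξ k ^ 2).det ^ 2))
      (nhdsWithin 0 {ξ | (∀ k, ξ k ≠ 0) ∧ Function.Injective fun k => ξ k ^ 2})
      (nhds (Matrix.of fun i j : Fin m =>
        2 * mixedTaylorCoeff F (2 * i + 1) (2 * j + 1)).det) := by
  obtain ⟨C, ρ, hρ, hbound, hsum⟩ := exists_norm_two_mul_mixedTaylorCoeff_odd_odd_le hF heven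
  set D := {ξ : Fin m → 𝕜 | (∀ k, ξ k ≠ 0) ∧ Function.Injective fun k => ξ k ^ 2}
  have hD : ∀ᶠ ξ in nhdsWithin 0 D, ξ ∈ D := self_mem_nhdsWithin
  have hsq : Tendsto (fun (ξ : Fin m → 𝕜) k => ξ k ^ 2) (nhdsWithin 0 D) (nhds 0) :=
    (Continuous.tendsto' (by fun_prop) _ _ (by ext; simp)).mono_left nhdsWithin_le_nhds
  have hpair (j k : Fin m) : Tendsto (fun ξ : Fin m → 𝕜 => (ξ j, ξ k)) (nhdsWithin 0 D) (nhds 0) :=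
    (Continuous.tendsto' (by fun_prop) _ _ rfl).mono_left nhdsWithin_le_nhds
  have hseries := eventually_all.2 fun j => eventually_all.2 fun k => (hpair j k).eventually hsum
  refine (tendsto_det_div_det_vandermonde hbound hρ hsq hsq (hD.mono fun ξ h => h.2)
    (hD.mono fun ξ h => h.2)
    (M := fun ξ => Matrix.of fun j k => (F (ξ j + ξ k) - F (ξ j - ξ k)) / (ξ j * ξ k)) ?_).congr
    fun ξ => ?_
  · filter_upwards [hD, hseries] with ξ hξ hs j k
    exact hs j k (hξ.1 j) (hξ.1 k)
  · have hdet : (Matrix.of fun j k => (F (ξ j + ξ k) - F (ξ j - ξ k)) / (ξ j * ξ k)).det =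
        (∏ k, ξ k ^ 2)⁻¹ * (Matrix.of fun j k => F (ξ j + ξ k) - F (ξ j - ξ k)).det := by
      rw [prod_pow, sq, mul_inv, ← prod_inv_distrib, mul_assoc, ← Matrix.det_mul_row,
        ← Matrix.det_mul_column]
      congr 1
      ext j k
      simp only [Matrix.of_apply]
      ring
    rw [hdet]
    ring

end EvenKernel

section StieltjesSequence

open scoped ContDiff

variable {𝕜 : Type*} [NontriviallyNormedField 𝕜] (b : ℕ → 𝕜) {F : 𝕜 → 𝕜}

/-- The functions `f 0 = F, f 1, f 2, …` with `f 0' = f 1` and `f (n + 1)' = f (n + 2) + b n • f n`.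
Formally `f n` is the `n`-th orthogonal polynomial for `b` evaluated at `d/du` and applied
to `F`. -/
noncomputable def stieltjesSeq (F : 𝕜 → 𝕜) : ℕ → 𝕜 → 𝕜
  | 0 => F
  | 1 => deriv F
  | n + 2 => fun u => deriv (stieltjesSeq F (n + 1)) u - b n * stieltjesSeq F n u

lemma contDiff_stieltjesSeq (hF : ContDiff 𝕜 ∞ F) (n : ℕ) : ContDiff 𝕜 ∞ (stieltjesSeq b F n) := by
  have hderiv {f : 𝕜 → 𝕜} (hf : ContDiff 𝕜 ∞ f) : ContDiff 𝕜 ∞ (deriv f) :=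
    (contDiff_infty_iff_deriv.1 hf).2
  induction n using Nat.twoStepInduction with
  | zero => exact hF
  | one => exact hderiv hF
  | more n ih₀ ih₁ => exact (hderiv ih₁).sub (contDiff_const.mul ih₀)

lemma hasDerivAt_stieltjesSeq_zero (hF : ContDiff 𝕜 ∞ F) (u : 𝕜) :
    HasDerivAt (stieltjesSeq b F 0) (stieltjesSeq b F 1 u) u :=
  (hF.differentiable (by simp)).differentiableAt.hasDerivAt

lemma hasDerivAt_stieltjesSeq_succ (hF : ContDiff 𝕜 ∞ F) (n : ℕ) (u : 𝕜) :
    HasDerivAt (stieltjesSeq b F (n + 1))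
      (stieltjesSeq b F (n + 2) u + b n * stieltjesSeq b F n u) u := by
  rw [stieltjesSeq, sub_add_cancel]
  exact ((contDiff_stieltjesSeq b hF (n + 1)).differentiable (by simp)).differentiableAt.hasDerivAt

lemma sum_dyckSum_mul_shift {R : Type*} [CommRing R] (b f : ℕ → R) (k : ℕ) :
    dyckSum b k 0 * f 1 +
        ∑ n ∈ range k, dyckSum b k (n + 1) * (f (n + 2) + b n * f n) =
      ∑ n ∈ range (k + 2), dyckSum b (k + 1) n * f n := by
  suffices h : ∀ N, dyckSum b k 0 * f 1 +
        ∑ n ∈ range N, dyckSum b k (n + 1) * (f (n + 2) + b n * f n) +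
        dyckSum b k (N + 1) * b N * f N + dyckSum b k (N + 2) * b (N + 1) * f (N + 1) =
      ∑ n ∈ range (N + 2), dyckSum b (k + 1) n * f n by
    simpa [dyckSum_eq_zero_of_lt] using h k
  intro N
  induction N with
  | zero =>
    simp only [sum_range_succ, range_zero, sum_empty, dyckSum]
    ring
  | succ N ih =>
    rw [sum_range_succ _ (N + 2), ← ih, sum_range_succ _ N, dyckSum]
    ring

lemma iteratedDeriv_eq_sum_dyckSum_mul_stieltjesSeq (hF : ContDiff 𝕜 ∞ F) (k : ℕ) :
    iteratedDeriv k F = fun u => ∑ n ∈ range (k + 1), dyckSum b k n * stieltjesSeq b F n u := by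
  induction k with
  | zero =>
    ext u
    simp [dyckSum, stieltjesSeq]
  | succ k ih =>
    ext u
    have hsum : HasDerivAt (fun u => ∑ n ∈ range (k + 1), dyckSum b k n * stieltjesSeq b F n u)
        (dyckSum b k 0 * stieltjesSeq b F 1 u + ∑ n ∈ range k, dyckSum b k (n + 1) *
          (stieltjesSeq b F (n + 2) u + b n * stieltjesSeq b F n u)) u := by
      simp only [sum_range_succ', add_comm _ (dyckSum b k 0 * _)]
      exact ((hasDerivAt_stieltjesSeq_zero b hF u).const_mul _).add <| HasDerivAt.fun_sum
        fun n _ => (hasDerivAt_stieltjesSeq_succ b hF n u).const_mul _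
    rw [iteratedDeriv_succ, ih, hsum.deriv,
      sum_dyckSum_mul_shift b (fun n => stieltjesSeq b F n u)]

lemma iteratedDeriv_eq_dyckSum_mul (hF : ContDiff 𝕜 ∞ F) {u : 𝕜}
    (hzero : ∀ n, stieltjesSeq b F (n + 1) u = 0) (k : ℕ) :
    iteratedDeriv k F u = dyckSum b k 0 * F u := by
  rw [iteratedDeriv_eq_sum_dyckSum_mul_stieltjesSeq b hF]
  simp only [sum_range_succ', hzero, mul_zero, sum_const_zero, zero_add, stieltjesSeq]

end StieltjesSequence

section SinhQuotient

open scoped ContDiff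

/-- The recurrence coefficients of the orthogonal polynomials whose moments are the derivatives at
`0` of `sinh (β u) / sinh (α u)`, up to the factor `β / α`. -/
noncomputable def sinhQuotientCoeff (α β : ℝ) (n : ℕ) : ℝ :=
  -((n + 1) ^ 2 * (α ^ 2 * (n + 1) ^ 2 - β ^ 2) / (4 * (n + 1) ^ 2 - 1))

variable {α β : ℝ} {F : ℝ → ℝ}

lemma sinhQuotientCoeff_succ (α β : ℝ) (n : ℕ) :
    (2 * n + 5) * (n + 1) ^ 2 * sinhQuotientCoeff α β (n + 1) =
      (n + 2) ^ 2 * ((2 * n + 1) * sinhQuotientCoeff α β n - α ^ 2 * (n + 1) ^ 2) := by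
  have h₀ : 4 * ((n : ℝ) + 1) ^ 2 - 1 = (2 * n + 1) * (2 * n + 3) := by ring
  have h₁ : 4 * ((n : ℝ) + 1 + 1) ^ 2 - 1 = (2 * n + 3) * (2 * n + 5) := by ring
  rw [sinhQuotientCoeff, sinhQuotientCoeff, Nat.cast_succ, h₀, h₁]
  field_simp
  ring

lemma hasDerivAt_sinh_const_mul (α u : ℝ) :
    HasDerivAt (fun u => Real.sinh (α * u)) (α * Real.cosh (α * u)) u := by
  simpa [mul_comm] using ((hasDerivAt_id u).const_mul α).sinh

lemma hasDerivAt_cosh_const_mul (α u : ℝ) :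
    HasDerivAt (fun u => Real.cosh (α * u)) (α * Real.sinh (α * u)) u := by
  simpa [mul_comm] using ((hasDerivAt_id u).const_mul α).cosh

lemma ode_of_sinh_mul_eq_sinh (hF : ContDiff ℝ ∞ F)
    (hsinh : ∀ u, Real.sinh (α * u) * F u = Real.sinh (β * u)) (u : ℝ) :
    Real.sinh (α * u) * deriv (deriv F) u + 2 * α * Real.cosh (α * u) * deriv F u +
      (α ^ 2 - β ^ 2) * Real.sinh (α * u) * F u = 0 := by
  have hF' (u : ℝ) : HasDerivAt F (deriv F u) u :=
    (hF.differentiable (by simp)).differentiableAt.hasDerivAt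
  have hF'' : HasDerivAt (deriv F) (deriv (deriv F) u) u :=
    ((contDiff_infty_iff_deriv.1 hF).2.differentiable (by simp)).differentiableAt.hasDerivAt
  have hfirst (u : ℝ) : α * Real.cosh (α * u) * F u + Real.sinh (α * u) * deriv F u =
      β * Real.cosh (β * u) :=
    ((hasDerivAt_sinh_const_mul α u).mul (hF' u)).unique <|
      (hasDerivAt_sinh_const_mul β u).congr_of_eventuallyEq (.of_forall hsinh)
  have hsecond := ((((hasDerivAt_cosh_const_mul α u).const_mul α).mul (hF' u)).add
    ((hasDerivAt_sinh_const_mul α u).mul hF'')).unique <|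
      ((hasDerivAt_cosh_const_mul β u).const_mul β).congr_of_eventuallyEq (.of_forall hfirst)
  linear_combination hsecond - β ^ 2 * hsinh u

-- The inductive step for `sinh_mul_stieltjesSeq_ladder`: `p`, `q`, `r`, `t` are the values of four
-- consecutive `stieltjesSeq`, primes are derivatives, and `hq` is a differentiated ladder relation.
lemma ladder_relation_succ {S C α n a b p q r t p' r' : ℝ} (hn : n + 1 ≠ 0)
    (hp : (n + 1) * (S * p') = α * n * (n + 1) * (C * p) + (2 * n + 1) * (S * q))
    (hq : (n + 2) * (α * C * (r + a * p) + S * (r' + a * p')) =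
      α * (n + 1) * (n + 2) * (α * S * q + C * (r + a * p)) +
        (2 * n + 3) * (α * C * r + S * r'))
    (hr : r' = t + b * q)
    (hab : (2 * n + 5) * (n + 1) ^ 2 * b =
      (n + 2) ^ 2 * ((2 * n + 1) * a - α ^ 2 * (n + 1) ^ 2)) :
    (n + 3) * (S * r') = α * (n + 2) * (n + 3) * (C * r) + (2 * n + 5) * (S * t) := by
  refine mul_left_cancel₀ (pow_ne_zero 2 hn) ?_
  linear_combination (n + 2) * ((n + 1) * hq - (n + 2) * a * hp) + S * q * hab +
    (2 * n + 5) * S * (n + 1) ^ 2 * hr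

-- At `u = 0` this forces every `f (n + 1)` to vanish, so that the derivatives of `F` at `0` are
-- the Dyck path sums times `F 0`.
lemma sinh_mul_stieltjesSeq_ladder (hF : ContDiff ℝ ∞ F)
    (hsinh : ∀ u, Real.sinh (α * u) * F u = Real.sinh (β * u)) (n : ℕ) (u : ℝ) :
    (n + 1) * (Real.sinh (α * u) * deriv (stieltjesSeq (sinhQuotientCoeff α β) F n) u) =
      α * n * (n + 1) * (Real.cosh (α * u) * stieltjesSeq (sinhQuotientCoeff α β) F n u) +
        (2 * n + 1) *
          (Real.sinh (α * u) * stieltjesSeq (sinhQuotientCoeff α β) F (n + 1) u) := by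
  set b := sinhQuotientCoeff α β with hb
  set f := stieltjesSeq b F with hf
  have hf' (n : ℕ) (u : ℝ) : HasDerivAt (f (n + 1)) (f (n + 2) u + b n * f n u) u :=
    hasDerivAt_stieltjesSeq_succ b hF n u
  induction n using Nat.twoStepInduction generalizing u with
  | zero => simp [hf, stieltjesSeq]
  | one =>
    have hode := ode_of_sinh_mul_eq_sinh hF hsinh u
    have hb0 : 3 * b 0 = -(α ^ 2 - β ^ 2) := by
      rw [hb, sinhQuotientCoeff]
      push_cast
      ring
    have h₂ : f 2 u = deriv (deriv F) u - b 0 * F u := rfl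
    have h₁ : f 1 = deriv F := rfl
    rw [h₁, h₂]
    push_cast
    linear_combination -hode + Real.sinh (α * u) * F u * hb0
  | more n ih₀ ih₁ =>
    have hn : DifferentiableAt ℝ (f n) u :=
      ((contDiff_stieltjesSeq b hF n).differentiable (by simp)).differentiableAt
    have hladder (u : ℝ) : (n + 2) * (Real.sinh (α * u) * (f (n + 2) u + b n * f n u)) =
        α * (n + 1) * (n + 2) * (Real.cosh (α * u) * f (n + 1) u) +
          (2 * n + 3) * (Real.sinh (α * u) * f (n + 2) u) := by
      have h := ih₁ u
      rw [(hf' n u).deriv] at h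
      push_cast at h
      linear_combination h
    have hderiv := (((hasDerivAt_sinh_const_mul α u).mul
      ((hf' (n + 1) u).fun_add (hn.hasDerivAt.const_mul (b n)))).const_mul ((n : ℝ) + 2)).unique <|
        ((((hasDerivAt_cosh_const_mul α u).mul (hf' n u)).const_mul (α * (n + 1) * (n + 2))).add
          (((hasDerivAt_sinh_const_mul α u).mul (hf' (n + 1) u)).const_mul
            (2 * (n : ℝ) + 3))).congr_of_eventuallyEq (.of_forall hladder)
    have hstep := ladder_relation_succ (r := f (n + 2) u) (t := f (n + 3) u)
      (n.cast_add_one_ne_zero (R := ℝ)) (ih₀ u) (by linear_combination hderiv) rfl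
      (sinhQuotientCoeff_succ α β n)
    rw [(hf' (n + 1) u).deriv]
    push_cast
    linear_combination hstep

lemma stieltjesSeq_succ_zero (hα : α ≠ 0) (hF : ContDiff ℝ ∞ F)
    (hsinh : ∀ u, Real.sinh (α * u) * F u = Real.sinh (β * u)) (n : ℕ) :
    stieltjesSeq (sinhQuotientCoeff α β) F (n + 1) 0 = 0 := by
  have hladder := sinh_mul_stieltjesSeq_ladder hF hsinh (n + 1) 0
  simp only [mul_zero, Real.sinh_zero, Real.cosh_zero, zero_mul, one_mul, add_zero] at hladder
  refine (mul_eq_zero.1 hladder.symm).resolve_left ?_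
  positivity

lemma descentWeight_sinhQuotientCoeff (α β : ℝ) (n : ℕ) :
    descentWeight (sinhQuotientCoeff α β) n = (n.factorial : ℝ) ^ 2 *
      ∏ l ∈ range n, (β ^ 2 - α ^ 2 * (l + 1) ^ 2) / (4 * (l + 1) ^ 2 - 1) := by
  induction n with
  | zero => simp [descentWeight_zero]
  | succ n ih =>
    rw [descentWeight_succ, ih, prod_range_succ, sinhQuotientCoeff, Nat.factorial_succ]
    push_cast
    ring

theorem det_mixedTaylorCoeff_of_sinh_mul_eq_sinh (hα : α ≠ 0) (hF : ContDiff ℝ ∞ F)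
    (hsinh : ∀ u, Real.sinh (α * u) * F u = Real.sinh (β * u)) (m : ℕ) :
    (Matrix.of fun i j : Fin m => 2 * mixedTaylorCoeff F (2 * i + 1) (2 * j + 1)).det =
      ∏ i : Fin m, (2 * F 0 * ∏ l ∈ range (2 * i + 1),
        (β ^ 2 - α ^ 2 * (l + 1) ^ 2) / (4 * (l + 1) ^ 2 - 1)) := by
  set b := sinhQuotientCoeff α β
  have hentry (p q : ℕ) : 2 * mixedTaylorCoeff F p q =
      (p.factorial : ℝ)⁻¹ * ((q.factorial : ℝ)⁻¹ * (2 * F 0 * dyckSum b (p + q) 0)) := by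
    rw [mixedTaylorCoeff,
      iteratedDeriv_eq_dyckSum_mul b hF (stieltjesSeq_succ_zero hα hF hsinh)]
    ring
  have hdet : (Matrix.of fun i j : Fin m => 2 * mixedTaylorCoeff F (2 * i + 1) (2 * j + 1)).det =
      (∏ i : Fin m, ((2 * i + 1 : ℕ).factorial : ℝ)⁻¹) *
        ((∏ i : Fin m, ((2 * i + 1 : ℕ).factorial : ℝ)⁻¹) *
          ((∏ _i : Fin m, 2 * F 0) * ∏ i : Fin m, descentWeight b (2 * i + 1))) := by
    rw [← det_dyckSum_odd_add_odd, ← Matrix.det_mul_row, ← Matrix.det_mul_row,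
      ← Matrix.det_mul_column]
    congr 1
    ext i j
    simp only [Matrix.of_apply, hentry]
  rw [hdet]
  simp only [← prod_mul_distrib]
  refine prod_congr rfl fun i _ => ?_
  rw [descentWeight_sinhQuotientCoeff]
  have hfac : ((2 * i + 1 : ℕ).factorial : ℝ) ≠ 0 := by positivity
  generalize (∏ l ∈ range (2 * (i : ℕ) + 1), _ : ℝ) = w
  field_simp

end SinhQuotient

section SinhRatio

/-- The continuous extension of `u ↦ sinh (u / 2) / sinh (3 * u / 2)`. -/
noncomputable def sinhRatio (u : ℝ) : ℝ := 1 / (1 + 2 * Real.cosh u)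

lemma one_add_two_mul_cosh_pos (u : ℝ) : 0 < 1 + 2 * Real.cosh u := by
  have := Real.cosh_pos u
  positivity

lemma sinhRatio_zero : sinhRatio 0 = 1 / 3 := by
  norm_num [sinhRatio]

lemma even_sinhRatio : Function.Even sinhRatio := fun u => by
  rw [sinhRatio, Real.cosh_neg, sinhRatio]

lemma contDiff_sinhRatio {n : WithTop ℕ∞} : ContDiff ℝ n sinhRatio :=
  contDiff_const.div (contDiff_const.add (contDiff_const.mul Real.contDiff_cosh))
    fun u => (one_add_two_mul_cosh_pos u).ne'

lemma analyticAt_sinhRatio (u : ℝ) : AnalyticAt ℝ sinhRatio u :=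
  contDiff_sinhRatio.contDiffAt.analyticAt

lemma sinh_mul_sinhRatio (u : ℝ) :
    Real.sinh (3 / 2 * u) * sinhRatio u = Real.sinh (1 / 2 * u) := by
  have hcosh : Real.cosh u = Real.cosh (2 * (1 / 2 * u)) := by ring_nf
  have hne := (one_add_two_mul_cosh_pos u).ne'
  rw [show 3 / 2 * u = 3 * (1 / 2 * u) by ring, sinhRatio, mul_one_div, div_eq_iff hne, hcosh,
    Real.sinh_three_mul, Real.cosh_two_mul, Real.cosh_sq]
  ring

lemma sinh_div_sinh_eq_sinhRatio {u : ℝ} (hu : u ≠ 0) :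
    Real.sinh (u / 2) / Real.sinh (3 * u / 2) = sinhRatio u := by
  have hne : Real.sinh (3 * u / 2) ≠ 0 := Real.sinh_ne_zero.2 (by simpa using hu)
  rw [div_eq_iff hne, mul_comm, mul_div_right_comm, sinh_mul_sinhRatio, one_div_mul_eq_div]

lemma gKer_eq_sinhRatio {x y : ℝ} (h : x + y ≠ 0) :
    gKer x y = sinhRatio (x + y) - sinhRatio (x - y) := by
  unfold gKer
  split_ifs with hxy
  · subst hxy
    rw [← sinh_div_sinh_eq_sinhRatio h, sub_self, sinhRatio_zero]
    congr 3 <;> ring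
  · rw [sinh_div_sinh_eq_sinhRatio h, sinh_div_sinh_eq_sinhRatio (sub_ne_zero.2 hxy)]

lemma det_mixedTaylorCoeff_sinhRatio (m : ℕ) :
    (Matrix.of fun i j : Fin m => 2 * mixedTaylorCoeff sinhRatio (2 * i + 1) (2 * j + 1)).det =
      ∏ i ∈ range m, (2 / 3 * ∏ l ∈ range (2 * i + 1),
        (1 - 9 * ((l : ℝ) + 1) ^ 2) / (4 * (4 * ((l : ℝ) + 1) ^ 2 - 1))) := by
  rw [det_mixedTaylorCoeff_of_sinh_mul_eq_sinh (by norm_num) contDiff_sinhRatio sinh_mul_sinhRatio,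
    ← Fin.prod_univ_eq_prod_range fun i => 2 / 3 * ∏ l ∈ range (2 * i + 1),
      (1 - 9 * ((l : ℝ) + 1) ^ 2) / (4 * (4 * ((l : ℝ) + 1) ^ 2 - 1)), sinhRatio_zero]
  refine prod_congr rfl fun i _ => ?_
  congr 1
  · norm_num
  · refine prod_congr rfl fun l _ => ?_
    rw [← div_div]
    congr 1
    ring

end SinhRatio

section LimitConstant

lemma prod_Icc_one_eq_prod_range {M : Type*} [CommMonoid M] (f : ℕ → M) (n : ℕ) :
    ∏ i ∈ Icc 1 n, f i = ∏ i ∈ range n, f (i + 1) := by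
  rw [← Ico_add_one_right_eq_Icc, prod_Ico_eq_prod_range]
  simp only [Nat.add_sub_cancel, add_comm 1]

lemma prod_range_even_mul_odd {M : Type*} [CommMonoid M] (f : ℕ → M) (n : ℕ) :
    (∏ j ∈ range n, f (2 * j)) * ∏ j ∈ range n, f (2 * j + 1) = ∏ l ∈ range (2 * n), f l := by
  induction n with
  | zero => simp
  | succ n ih =>
    rw [Nat.mul_succ, prod_range_succ, prod_range_succ, prod_range_succ, prod_range_succ,
      mul_mul_mul_comm, ih, mul_assoc]

-- The factors with `i ≤ 2` or `j = 1` are split off; the others form the product for `m`, since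
-- `2 * j - i` is invariant under `(i, j) ↦ (i + 2, j + 1)`.
lemma prod_Icc_prod_Icc_two_mul_sub_succ {M : Type*} [CommMonoid M] (f : ℤ → M) (m : ℕ) :
    ∏ i ∈ Icc 1 (2 * (m + 1) + 1), ∏ j ∈ Icc 1 (m + 1), f (2 * j - i) =
      (∏ i ∈ Icc 1 (2 * m + 1), ∏ j ∈ Icc 1 m, f (2 * j - i)) *
        (f 0 * ∏ l ∈ range (2 * m + 1), f (l + 1) * f (-(l + 1))) := by
  have hrows : (∏ j ∈ range (m + 1), f (2 * j)) * ∏ j ∈ range (m + 1), f (2 * j + 1) =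
      f 0 * ∏ l ∈ range (2 * m + 1), f (l + 1) := by
    have h := prod_range_even_mul_odd (fun l : ℕ => f l) (m + 1)
    rw [Nat.mul_succ, prod_range_succ' _ (2 * m + 1)] at h
    push_cast at h
    rw [h, mul_comm]
  have hrest : ∏ i ∈ range (2 * m + 1), ∏ j ∈ range (m + 1), f (2 * j - i - 1) =
      (∏ i ∈ range (2 * m + 1), ∏ j ∈ range m, f (2 * j - i + 1)) *
        ∏ l ∈ range (2 * m + 1), f (-(l + 1)) := by
    simp only [← prod_mul_distrib, prod_range_succ' _ m]
    refine prod_congr rfl fun i _ => ?_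
    congr 1
    · refine prod_congr rfl fun j _ => congrArg f ?_
      push_cast
      ring
    · refine congrArg f ?_
      push_cast
      ring
  have hsplit : ∏ i ∈ Icc 1 (2 * (m + 1) + 1), ∏ j ∈ Icc 1 (m + 1), f (2 * j - i) =
      (∏ i ∈ range (2 * m + 1), ∏ j ∈ range (m + 1), f (2 * j - i - 1)) *
        ((∏ j ∈ range (m + 1), f (2 * j)) * ∏ j ∈ range (m + 1), f (2 * j + 1)) := by
    simp only [prod_Icc_one_eq_prod_range, Nat.mul_succ, prod_range_succ' _ (2 * m + 1),
      prod_range_succ' _ (2 * m + 1 + 1), mul_assoc]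
    congr 1
    · refine prod_congr rfl fun i _ => prod_congr rfl fun j _ => congrArg f ?_
      push_cast
      ring
    · congr 1 <;> refine prod_congr rfl fun j _ => congrArg f ?_ <;> push_cast <;> ring
  rw [hsplit, hrest, hrows, mul_assoc, mul_left_comm _ (f 0),
    mul_comm (∏ l ∈ range _, f (-(l + 1))), prod_mul_distrib]
  simp only [prod_Icc_one_eq_prod_range]
  congr 1
  refine prod_congr rfl fun i _ => prod_congr rfl fun j _ => congrArg f ?_
  push_cast
  ring

lemma prod_Icc_prod_Icc_two_mul_sub {M : Type*} [CommMonoid M] (f : ℤ → M) (m : ℕ) :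
    ∏ i ∈ Icc 1 (2 * m + 1), ∏ j ∈ Icc 1 m, f (2 * j - i) =
      ∏ i ∈ range m, (f 0 * ∏ l ∈ range (2 * i + 1), f (l + 1) * f (-(l + 1))) := by
  induction m with
  | zero => simp
  | succ m ih => rw [prod_Icc_prod_Icc_two_mul_sub_succ, ih, prod_range_succ _ m]

open scoped Nat in
lemma succ_mul_prod_Icc_succ_add (n : ℕ) :
    (n + 1) * ∏ i ∈ Icc 1 n, (n + 1 + i) = 2 ^ n * (2 * n + 1)‼ := by
  have hasc : (n + 1) * ∏ i ∈ Icc 1 n, (n + 1 + i) = (n + 1).ascFactorial (n + 1) := by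
    rw [Nat.ascFactorial_eq_prod_range, prod_range_succ', prod_Icc_one_eq_prod_range, mul_comm,
      add_zero]
  refine Nat.eq_of_mul_eq_mul_left n.factorial_pos ?_
  rw [hasc, Nat.factorial_mul_ascFactorial, ← add_assoc, ← two_mul,
    Nat.factorial_eq_mul_doubleFactorial, Nat.doubleFactorial_two_mul]
  ring

open scoped Nat in
lemma prod_range_succ_four_mul_sq_sub_one {R : Type*} [CommRing R] (n : ℕ) :
    ∏ l ∈ range (n + 1), (4 * ((l : R) + 1) ^ 2 - 1) =
      ((2 * n + 1)‼ : R) * ((2 * n + 3)‼ : R) := by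
  induction n with
  | zero => norm_num [Nat.doubleFactorial]
  | succ n ih =>
    have h₃ : (2 * n + 3)‼ = (2 * n + 3) * (2 * n + 1)‼ := Nat.doubleFactorial_add_two _
    have h₅ : (2 * n + 5)‼ = (2 * n + 5) * (2 * n + 3)‼ := Nat.doubleFactorial_add_two _
    rw [prod_range_succ, ih, Nat.mul_succ, h₅, h₃]
    push_cast
    ring

lemma prod_Icc_prod_Ico_const_mul {M : Type*} [CommMonoid M] (c : M) (f : ℕ → ℕ → M) (n : ℕ) :
    ∏ j ∈ Icc 1 n, ∏ i ∈ Ico 1 j, c * f j i =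
      c ^ n.choose 2 * ∏ j ∈ Icc 1 n, ∏ i ∈ Ico 1 j, f j i := by
  induction n with
  | zero => simp
  | succ n ih =>
    rw [prod_Icc_succ_top (by lia), prod_Icc_succ_top (by lia), ih, prod_mul_distrib, prod_const,
      Nat.card_Ico, Nat.add_sub_cancel, Nat.choose_succ_succ', Nat.choose_one_right, pow_add,
      mul_comm (c ^ n) (c ^ _), mul_mul_mul_comm]

lemma prod_Icc_add_prod_Ico {M : Type*} [CommMonoid M] (f : ℕ → ℕ → M) (m n : ℕ) :
    ∏ j ∈ Icc 1 (m + n), ∏ i ∈ Ico 1 j, f j i =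
      (∏ j ∈ Icc 1 m, ∏ i ∈ Ico 1 j, f j i) *
        (∏ j ∈ Icc (m + 1) (m + n), ∏ i ∈ Ico (m + 1) j, f j i) *
        ∏ i ∈ Icc 1 m, ∏ j ∈ Icc 1 n, f (m + j) i := by
  have hcross : ∏ i ∈ Icc 1 m, ∏ j ∈ Icc 1 n, f (m + j) i =
      ∏ j ∈ Icc (m + 1) (m + n), ∏ i ∈ Ico 1 (m + 1), f j i := by
    rw [Finset.prod_comm]
    simp only [← Ico_add_one_right_eq_Icc]
    rw [prod_Ico_add (fun j => ∏ i ∈ Ico 1 (m + 1), f j i), add_comm 1, add_right_comm,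
      add_comm n]
  have hcol : ∀ j ∈ Icc (m + 1) (m + n),
      (∏ i ∈ Ico (m + 1) j, f j i) * ∏ i ∈ Ico 1 (m + 1), f j i = ∏ i ∈ Ico 1 j, f j i :=
    fun j hj => by
      rw [mul_comm, prod_Ico_consecutive _ (by lia) (mem_Icc.1 hj).1]
  rw [hcross, mul_assoc, ← prod_mul_distrib, prod_congr rfl hcol]
  simp only [← Ico_add_one_right_eq_Icc]
  rw [prod_Ico_consecutive _ (by lia) (by lia)]

lemma prod_Icc_prod_Icc_one_add_three_mul_sub (m : ℕ) :
    ∏ i ∈ Icc 1 (2 * m + 1), ∏ j ∈ Icc 1 m, (1 + 3 * (2 * (j : ℝ) - (i : ℝ))) =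
      ∏ i ∈ range m, ∏ l ∈ range (2 * i + 1), (1 - 9 * ((l : ℝ) + 1) ^ 2) := by
  have h := prod_Icc_prod_Icc_two_mul_sub (fun k : ℤ => 1 + 3 * (k : ℝ)) m
  push_cast at h
  rw [h]
  refine prod_congr rfl fun i _ => ?_
  rw [mul_zero, add_zero, one_mul]
  exact prod_congr rfl fun l _ => by ring

open scoped Nat in
lemma three_pow_mul_factorial_mul_prod_add (m : ℕ) :
    3 ^ m * ((2 * m)! : ℝ) * ∏ j ∈ Icc 1 (2 * m), ∏ i ∈ Ico 1 j, ((j : ℝ) + i) =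
      ∏ i ∈ range m, (3 / 2 * ∏ l ∈ range (2 * i + 1), 4 * (4 * ((l : ℝ) + 1) ^ 2 - 1)) := by
  induction m with
  | zero => simp
  | succ m ih =>
    have hodd := congrArg (Nat.cast (R := ℝ)) (succ_mul_prod_Icc_succ_add (2 * m))
    have heven := congrArg (Nat.cast (R := ℝ)) (succ_mul_prod_Icc_succ_add (2 * m + 1))
    rw [prod_range_succ, ← ih, prod_mul_distrib, prod_const, card_range,
      prod_range_succ_four_mul_sq_sub_one, Nat.mul_succ, prod_Icc_succ_top (by lia),
      prod_Icc_succ_top (by lia), Ico_add_one_right_eq_Icc, Ico_add_one_right_eq_Icc,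
      Nat.factorial_succ, Nat.factorial_succ]
    rw [Nat.mul_succ] at heven
    have hfour : (4 : ℝ) ^ (2 * m + 1) = 2 * (2 ^ (2 * m) * 2 ^ (2 * m + 1)) := by
      rw [show (4 : ℝ) = 2 * 2 by norm_num, mul_pow]
      ring
    rw [hfour]
    push_cast at hodd heven ⊢
    linear_combination 3 ^ (m + 1) * ((2 * m)! : ℝ) *
      (∏ j ∈ Icc 1 (2 * m), ∏ i ∈ Ico 1 j, ((j : ℝ) + i)) *
      ((2 * m + 1 + 1) * (∏ i ∈ Icc 1 (2 * m + 1), (2 * (m : ℝ) + 1 + 1 + i)) * hodd +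
        2 ^ (2 * m) * ((2 * (2 * m) + 1)‼ : ℝ) * heven)

lemma three_pow_mul_three_pow_choose_two (m : ℕ) :
    (3 : ℝ) ^ m * 3 ^ (2 * m).choose 2 = 9 ^ (m * m) := by
  have hexp : m + (2 * m).choose 2 = 2 * (m * m) := by
    rw [Nat.choose_two_right, mul_assoc, Nat.mul_div_cancel_left _ two_pos]
    rcases m with _ | m
    · rfl
    · rw [Nat.mul_succ, Nat.add_sub_assoc (by lia)]
      ring
  rw [← pow_add, hexp, pow_mul]
  norm_num

lemma prod_cross_nine_mul_sub_mul_add (m : ℕ) :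
    ∏ i ∈ Icc 1 m, ∏ j ∈ Icc 1 m,
        9 * ((m : ℝ) + (j : ℝ) - (i : ℝ)) * ((m : ℝ) + (j : ℝ) + (i : ℝ)) =
      9 ^ (m * m) * ∏ i ∈ Icc 1 m, ∏ j ∈ Icc 1 m, (((m + j : ℕ) : ℝ) ^ 2 - (i : ℝ) ^ 2) := by
  have hterm (i j : ℕ) : 9 * ((m : ℝ) + (j : ℝ) - (i : ℝ)) * ((m : ℝ) + (j : ℝ) + (i : ℝ)) =
      9 * (((m + j : ℕ) : ℝ) ^ 2 - (i : ℝ) ^ 2) := by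
    push_cast
    ring
  simp only [hterm, prod_mul_distrib, prod_const, Nat.card_Icc, Nat.add_sub_cancel, pow_mul]

lemma limit_denominator_eq (m : ℕ) :
    ((2 * m).factorial : ℝ) *
        (∏ j ∈ Icc 1 m, ∏ i ∈ Ico 1 j, ((j : ℝ) ^ 2 - (i : ℝ) ^ 2)) *
        (∏ j ∈ Icc (m + 1) (2 * m), ∏ i ∈ Ico (m + 1) j, ((j : ℝ) ^ 2 - (i : ℝ) ^ 2)) *
        (∏ i ∈ Icc 1 m, ∏ j ∈ Icc 1 m,
          9 * ((m : ℝ) + (j : ℝ) - (i : ℝ)) * ((m : ℝ) + (j : ℝ) + (i : ℝ))) =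
      (∏ j ∈ Icc 1 (2 * m), ∏ i ∈ Ico 1 j, 3 * ((j : ℝ) - (i : ℝ))) *
        (3 ^ m * ((2 * m).factorial : ℝ) *
          ∏ j ∈ Icc 1 (2 * m), ∏ i ∈ Ico 1 j, ((j : ℝ) + i)) := by
  have hsplit := prod_Icc_add_prod_Ico (fun j i => (j : ℝ) ^ 2 - (i : ℝ) ^ 2) m m
  have hfactor : ∏ j ∈ Icc 1 (2 * m), ∏ i ∈ Ico 1 j, ((j : ℝ) ^ 2 - (i : ℝ) ^ 2) =
      (∏ j ∈ Icc 1 (2 * m), ∏ i ∈ Ico 1 j, ((j : ℝ) + i)) *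
        ∏ j ∈ Icc 1 (2 * m), ∏ i ∈ Ico 1 j, ((j : ℝ) - i) := by
    simp only [← prod_mul_distrib, sq_sub_sq]
  rw [← two_mul, hfactor] at hsplit
  rw [prod_cross_nine_mul_sub_mul_add, prod_Icc_prod_Ico_const_mul,
    ← three_pow_mul_three_pow_choose_two]
  linear_combination (-((2 * m).factorial : ℝ) * (3 ^ m * 3 ^ (2 * m).choose 2)) * hsplit

lemma limit_formula_eq_prod (m : ℕ) :
    (∏ j ∈ Icc 1 (2 * m), ∏ i ∈ Ico 1 j, 3 * ((j : ℝ) - (i : ℝ))) *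
        (∏ i ∈ Icc 1 (2 * m + 1), ∏ j ∈ Icc 1 m, (1 + 3 * (2 * (j : ℝ) - (i : ℝ)))) /
        (((2 * m).factorial : ℝ) *
          (∏ j ∈ Icc 1 m, ∏ i ∈ Ico 1 j, ((j : ℝ) ^ 2 - (i : ℝ) ^ 2)) *
          (∏ j ∈ Icc (m + 1) (2 * m), ∏ i ∈ Ico (m + 1) j, ((j : ℝ) ^ 2 - (i : ℝ) ^ 2)) *
          (∏ i ∈ Icc 1 m, ∏ j ∈ Icc 1 m,
            9 * ((m : ℝ) + (j : ℝ) - (i : ℝ)) * ((m : ℝ) + (j : ℝ) + (i : ℝ)))) =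
      ∏ i ∈ range m, (2 / 3 * ∏ l ∈ range (2 * i + 1),
        (1 - 9 * ((l : ℝ) + 1) ^ 2) / (4 * (4 * ((l : ℝ) + 1) ^ 2 - 1))) := by
  have hne : ∏ j ∈ Icc 1 (2 * m), ∏ i ∈ Ico 1 j, 3 * ((j : ℝ) - (i : ℝ)) ≠ 0 :=
    prod_ne_zero_iff.2 fun j _ => prod_ne_zero_iff.2 fun i hi =>
      mul_ne_zero three_ne_zero (sub_ne_zero.2 (Nat.cast_injective.ne (mem_Ico.1 hi).2.ne'))
  rw [limit_denominator_eq, mul_div_mul_left _ _ hne, prod_Icc_prod_Icc_one_add_three_mul_sub,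
    three_pow_mul_factorial_mul_prod_add, ← prod_div_distrib]
  refine prod_congr rfl fun i _ => ?_
  rw [prod_div_distrib, div_mul_eq_div_div_swap, div_div_eq_mul_div, mul_div_assoc, mul_comm]

end LimitConstant

lemma det_vandermonde_sq {R : Type*} [CommRing R] {n : ℕ} (v : Fin n → R) :
    (Matrix.vandermonde v).det ^ 2 =
      ∏ j : Fin n, ∏ i ∈ univ.filter (fun i : Fin n => i < j), (v j - v i) ^ 2 := by
  simp only [Matrix.det_vandermonde, ← prod_pow]
  exact prod_comm' (by simp)

lemma strictMono_sq_of_pos {ι : Type*} [Preorder ι] {ξ : ι → ℝ} (hξ : StrictMono ξ)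
    (hpos : ∀ i, 0 < ξ i) : StrictMono fun i => ξ i ^ 2 :=
  fun i _ hij => pow_lt_pow_left₀ (hξ hij) (hpos i).le two_ne_zero

/-- Homogeneous limit of the inhomogeneous determinant: for `m ≥ 1`, the ratio
`det_m[g(ξ_j,ξ_k)] / (∏_k ξ_k² · ∏_{i<j}(ξ_j²−ξ_i²)²)`
tends, as `ξ → 0` within the domain `0 < ξ_1 < … < ξ_m`, to the explicit constant `L_m`. -/
theorem det_g_homogeneous_limit (m : ℕ) (hm : 1 ≤ m) :
    Tendsto
      (fun ξ : Fin m → ℝ =>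
        Matrix.det (Matrix.of fun j k : Fin m => gKer (ξ j) (ξ k)) /
          ((∏ k : Fin m, (ξ k) ^ 2) *
            ∏ j : Fin m, ∏ i ∈ Finset.univ.filter (fun i : Fin m => i < j),
              ((ξ j) ^ 2 - (ξ i) ^ 2) ^ 2))
      (nhdsWithin 0 {ξ : Fin m → ℝ | StrictMono ξ ∧ ∀ i, 0 < ξ i})
      (nhds
        ((∏ j ∈ Icc 1 (2 * m), ∏ i ∈ Ico 1 j, 3 * ((j : ℝ) - (i : ℝ))) *
         (∏ i ∈ Icc 1 (2 * m + 1), ∏ j ∈ Icc 1 m, (1 + 3 * (2 * (j : ℝ) - (i : ℝ)))) /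
         (((2 * m).factorial : ℝ) *
          (∏ j ∈ Icc 1 m, ∏ i ∈ Ico 1 j, ((j : ℝ) ^ 2 - (i : ℝ) ^ 2)) *
          (∏ j ∈ Icc (m + 1) (2 * m), ∏ i ∈ Ico (m + 1) j, ((j : ℝ) ^ 2 - (i : ℝ) ^ 2)) *
          (∏ i ∈ Icc 1 m, ∏ j ∈ Icc 1 m,
            9 * ((m : ℝ) + (j : ℝ) - (i : ℝ)) * ((m : ℝ) + (j : ℝ) + (i : ℝ)))))) := by
  rw [limit_formula_eq_prod, ← det_mixedTaylorCoeff_sinhRatio]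
  have hlim := tendsto_det_even_kernel (analyticAt_sinhRatio 0) even_sinhRatio m
  refine Tendsto.congr' ?_ (hlim.mono_left (nhdsWithin_mono 0 fun ξ hξ =>
    ⟨fun k => (hξ.2 k).ne', (strictMono_sq_of_pos hξ.1 hξ.2).injective⟩))
  filter_upwards [self_mem_nhdsWithin] with ξ ⟨_, hpos⟩
  have hkernel (j k : Fin m) :
      gKer (ξ j) (ξ k) = sinhRatio (ξ j + ξ k) - sinhRatio (ξ j - ξ k) :=
    gKer_eq_sinhRatio (add_pos (hpos j) (hpos k)).ne'
  simp only [hkernel, det_vandermonde_sq]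
end

section
/- Let ζ ∈ (0, π). For every real λ, sin(ζ) / ( π·(sinh²(λ) + sin²(ζ/2)) ) = 1/(ζ·cosh(πλ/ζ)) + ∫_ℝ [ sin(2ζ) / ( 2π·(sinh²(λ−μ) + sin²(ζ)) ) ] · [ 1/(ζ·cosh(πμ/ζ)) ] dμ. -/
open Real MeasureTheory

/-!
Let `F` be the source term of the Lieb equation minus `ρ`. In terms of
`ℓ w = coth w - β coth (β w)` with `β = π / (2ζ)`, one has
`F z = (ℓ (z - iζ/2) - ℓ (z + iζ/2)) / (iπ)`. The simple poles of the two terms of `ℓ` at `0`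
cancel, so `F` is holomorphic and bounded on the strip `|im z| ≤ ζ/2`. In the sum of its values at
`x ± iζ/2` the terms `ℓ x` cancel, as do the terms `coth (β (x ± iζ)) = coth (βx ± iπ/2)` by
`iπ`-periodicity; what remains is `2 K x`. Now `ρ / 2` is the Poisson kernel for the midline of
this strip, so the Poisson formula for `F` reads `F = K ⋆ ρ`.

The Poisson formula follows from Cauchy's theorem for `(f z - f 0) / sinh z` on `|im z| ≤ π/2`:
this function is holomorphic there and tends to `0` at both ends of the strip, so its integrals
over the two edges, where `sinh (t ± iπ/2) = ± i cosh t`, agree.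
-/

open Filter Topology Set

open Complex (I)

/-- The complex hyperbolic cotangent, with value `0` at its poles. The Lieb kernels are differences
of its vertical shifts. -/
noncomputable def coth (z : ℂ) : ℂ := Complex.cosh z / Complex.sinh z

/-- The entire function `sinh z / z`, with value `1` at `0`. Factoring `sinh z = z * sinhc z`
removes singularities of quotients by `sinh` at `0`. -/
noncomputable def sinhc : ℂ → ℂ := dslope Complex.sinh 0

theorem abs_re_le_norm_sinh (z : ℂ) : |z.re| ≤ ‖Complex.sinh z‖ :=
  calc |z.re| ≤ |Real.sinh z.re| := by
        rw [Real.abs_sinh]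
        exact Real.self_le_sinh_iff.2 (abs_nonneg _)
    _ = |‖Complex.exp z‖ - ‖Complex.exp (-z)‖| / 2 := by
        rw [Real.sinh_eq, abs_div, Nat.abs_ofNat, Complex.norm_exp, Complex.norm_exp,
          Complex.neg_re]
    _ ≤ ‖Complex.exp z - Complex.exp (-z)‖ / 2 := by
        gcongr
        exact abs_norm_sub_norm_le _ _
    _ = ‖Complex.sinh z‖ := by rw [Complex.sinh, norm_div, Complex.norm_ofNat]

theorem norm_cosh_le_norm_sinh_add_one (z : ℂ) :
    ‖Complex.cosh z‖ ≤ ‖Complex.sinh z‖ + 1 := by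
  rcases le_total 0 z.re with hz | hz
  · have hexp : ‖Complex.exp (-z)‖ ≤ 1 := by simpa [Complex.norm_exp] using hz
    calc ‖Complex.cosh z‖ = ‖Complex.sinh z + Complex.exp (-z)‖ := by
          rw [← Complex.cosh_sub_sinh, add_sub_cancel]
      _ ≤ ‖Complex.sinh z‖ + 1 := norm_add_le_of_le le_rfl hexp
  · have hexp : ‖Complex.exp z‖ ≤ 1 := by simpa [Complex.norm_exp] using hz
    calc ‖Complex.cosh z‖ = ‖-Complex.sinh z + Complex.exp z‖ := by
          rw [← Complex.sinh_add_cosh, neg_add_cancel_left]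
      _ ≤ ‖Complex.sinh z‖ + 1 := norm_add_le_of_le (norm_neg _).le hexp

theorem norm_coth_le {z : ℂ} (hz : z.re ≠ 0) : ‖coth z‖ ≤ 1 + |z.re|⁻¹ := by
  have hre : 0 < |z.re| := abs_pos.2 hz
  have hsinh : 0 < ‖Complex.sinh z‖ := hre.trans_le (abs_re_le_norm_sinh z)
  calc ‖coth z‖ ≤ (‖Complex.sinh z‖ + 1) / ‖Complex.sinh z‖ := by
        rw [coth, norm_div]
        gcongr
        exact norm_cosh_le_norm_sinh_add_one z
    _ = 1 + ‖Complex.sinh z‖⁻¹ := by field_simp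
    _ ≤ 1 + |z.re|⁻¹ := by
        gcongr
        exact abs_re_le_norm_sinh z

theorem coth_sub_mul_I_sub_coth_add_mul_I (u : ℝ) {a : ℝ} (ha : Real.sin a ≠ 0) :
    coth (u - a * I) - coth (u + a * I) =
      I * ((Real.sin (2 * a) / (Real.sinh u ^ 2 + Real.sin a ^ 2) : ℝ) : ℂ) := by
  have hpos : Real.sinh u ^ 2 + Real.sin a ^ 2 ≠ 0 := by positivity
  have hden : Complex.sinh (u - a * I) * Complex.sinh (u + a * I) =
      ((Real.sinh u ^ 2 + Real.sin a ^ 2 : ℝ) : ℂ) := by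
    rw [Complex.sinh_sub, Complex.sinh_add, Complex.cosh_mul_I, Complex.sinh_mul_I]
    push_cast
    linear_combination Complex.sinh (u : ℂ) ^ 2 * Complex.sin_sq_add_cos_sq (a : ℂ) +
      Complex.sin (a : ℂ) ^ 2 * Complex.cosh_sq (u : ℂ) -
      Complex.cosh (u : ℂ) ^ 2 * Complex.sin (a : ℂ) ^ 2 * Complex.I_sq
  have hnum : Complex.cosh (u - a * I) * Complex.sinh (u + a * I) -
      Complex.sinh (u - a * I) * Complex.cosh (u + a * I) = I * (Real.sin (2 * a) : ℝ) := by
    have h := Complex.sinh_sub (u + a * I) (u - a * I)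
    rw [show (u : ℂ) + a * I - (u - a * I) = (2 * a) * I by ring, Complex.sinh_mul_I] at h
    push_cast
    linear_combination -h
  have hne : Complex.sinh (u - a * I) * Complex.sinh (u + a * I) ≠ 0 := by
    rw [hden]
    exact_mod_cast hpos
  rw [coth, coth, div_sub_div _ _ (left_ne_zero_of_mul hne) (right_ne_zero_of_mul hne), hnum,
    hden, mul_div_assoc, Complex.ofReal_div]

theorem coth_sub_pi_div_four_mul_I_sub_coth_add_pi_div_four_mul_I (u : ℝ) :
    coth (u - (π / 4 : ℝ) * I) - coth (u + (π / 4 : ℝ) * I) =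
      I * ((2 / Real.cosh (2 * u) : ℝ) : ℂ) := by
  have hsin : Real.sin (π / 4) ≠ 0 := by
    rw [Real.sin_pi_div_four]
    positivity
  have hcosh : Real.sinh u ^ 2 + Real.sin (π / 4) ^ 2 = Real.cosh (2 * u) / 2 := by
    rw [Real.sin_pi_div_four, div_pow, Real.sq_sqrt two_pos.le, Real.cosh_two_mul, Real.cosh_sq]
    ring
  rw [coth_sub_mul_I_sub_coth_add_mul_I u hsin, hcosh, show 2 * (π / 4) = π / 2 by ring,
    Real.sin_pi_div_two, one_div_div]

theorem coth_sub_pi_div_two_mul_I (z : ℂ) :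
    coth (z - (π / 2 : ℝ) * I) = coth (z + (π / 2 : ℝ) * I) := by
  simp [coth, Complex.cosh_sub, Complex.cosh_add, Complex.sinh_sub, Complex.sinh_add,
    Complex.cosh_mul_I, Complex.sinh_mul_I, neg_div_neg_eq]

theorem eq_zero_of_sinh_eq_zero {z : ℂ} (h : Complex.sinh z = 0) (hz : |z.im| < π) : z = 0 := by
  obtain ⟨h₁, h₂⟩ := abs_lt.1 hz
  have hexp : Complex.exp z = Complex.exp (-z) := by
    rw [← Complex.cosh_add_sinh, ← Complex.cosh_sub_sinh, h, add_zero, sub_zero]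
  refine self_eq_neg.1 (Complex.exp_inj_of_neg_pi_lt_of_le_pi h₁ h₂.le ?_ ?_ hexp) <;>
    rw [Complex.neg_im] <;> linarith

theorem sinhc_of_ne_zero {z : ℂ} (hz : z ≠ 0) : sinhc z = Complex.sinh z / z := by
  rw [sinhc, dslope_of_ne _ hz, slope_def_field, Complex.sinh_zero, sub_zero, sub_zero]

theorem sinhc_zero : sinhc 0 = 1 := by
  rw [sinhc, dslope_same, Complex.deriv_sinh, Complex.cosh_zero]

theorem differentiable_sinhc : Differentiable ℂ sinhc :=
  differentiableOn_univ.1 <| (Complex.differentiableOn_dslope univ_mem).2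
    Complex.differentiable_sinh.differentiableOn

theorem sinhc_ne_zero {z : ℂ} (hz : |z.im| < π) : sinhc z ≠ 0 := by
  rcases eq_or_ne z 0 with rfl | h0
  · simp [sinhc_zero]
  · rw [sinhc_of_ne_zero h0]
    exact div_ne_zero (fun h => h0 (eq_zero_of_sinh_eq_zero h hz)) h0

theorem abs_cosh_smul_inv_one_add_sinh_sq (x : ℝ) :
    |Real.cosh x| • (1 + Real.sinh x ^ 2)⁻¹ = (Real.cosh x)⁻¹ := by
  have hcosh := (Real.cosh_pos x).ne'
  rw [abs_of_pos (Real.cosh_pos x), ← Real.cosh_sq', smul_eq_mul]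
  field_simp

theorem integrable_inv_cosh : Integrable fun x : ℝ => (Real.cosh x)⁻¹ := by
  have h := (integrableOn_image_iff_integrableOn_abs_deriv_smul MeasurableSet.univ
    (fun x _ => (Real.hasDerivAt_sinh x).hasDerivWithinAt) Real.sinh_injective.injOn
    fun y => (1 + y ^ 2)⁻¹).1 integrable_inv_one_add_sq.integrableOn
  simpa only [abs_cosh_smul_inv_one_add_sinh_sq, integrableOn_univ] using h

theorem integral_inv_cosh : ∫ x : ℝ, (Real.cosh x)⁻¹ = π := by
  have h := integral_image_eq_integral_abs_deriv_smul MeasurableSet.univ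
    (fun x _ => (Real.hasDerivAt_sinh x).hasDerivWithinAt) Real.sinh_injective.injOn
    fun y => (1 + y ^ 2)⁻¹
  rw [image_univ_of_surjective Real.sinh_surjective] at h
  simp only [abs_cosh_smul_inv_one_add_sinh_sq, setIntegral_univ] at h
  rw [← h, integral_univ_inv_one_add_sq]

section Strip

variable {E : Type*} [NormedAddCommGroup E] [NormedSpace ℂ E] {f : ℂ → E} {a b : ℝ}

theorem continuous_comp_horizontal_line {c : ℝ} (hf : DiffContOnCl ℂ f (Complex.im ⁻¹' Ioo a b))
    (hab : a < b) (hc : c ∈ Icc a b) : Continuous fun x : ℝ => f (x + c * I) := by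
  refine hf.continuousOn.comp_continuous (by fun_prop) fun x => ?_
  rw [Complex.closure_preimage_im, closure_Ioo hab.ne]
  simpa using hc

theorem tendsto_integral_vertical_segment {ι : Type*} {l : Filter ι} {u : ι → ℝ} (hab : a ≤ b)
    (hf : Tendsto f (comap (fun z => |z.re|) atTop ⊓ 𝓟 (Complex.im ⁻¹' Icc a b)) (𝓝 0))
    (hu : Tendsto (fun i => |u i|) l atTop) :
    Tendsto (fun i => ∫ y in a..b, f (u i + y * I)) l (𝓝 0) := by
  rw [NormedAddGroup.tendsto_nhds_zero]
  intro ε hε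
  have hδ : 0 < ε / (b - a + 1) := div_pos hε (by linarith)
  have hsmall := NormedAddGroup.tendsto_nhds_zero.1 hf _ hδ
  rw [eventually_inf_principal, eventually_comap] at hsmall
  filter_upwards [hu.eventually hsmall] with i hi
  have hle : ‖∫ y in a..b, f (u i + y * I)‖ ≤ ε / (b - a + 1) * |b - a| := by
    refine intervalIntegral.norm_integral_le_of_norm_le_const fun y hy => (hi _ ?_ ?_).le
    · simp
    · rw [uIoc_of_le hab] at hy
      simpa using Ioc_subset_Icc_self hy
  refine hle.trans_lt ?_
  rw [abs_of_nonneg (sub_nonneg.2 hab), div_mul_eq_mul_div, div_lt_iff₀ (by linarith)]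
  nlinarith

theorem integral_horizontal_line_eq (hab : a < b)
    (hf : DiffContOnCl ℂ f (Complex.im ⁻¹' Ioo a b))
    (hf₀ : Tendsto f (comap (fun z => |z.re|) atTop ⊓ 𝓟 (Complex.im ⁻¹' Icc a b)) (𝓝 0))
    (ha : Integrable fun x : ℝ => f (x + a * I)) (hb : Integrable fun x : ℝ => f (x + b * I)) :
    ∫ x : ℝ, f (x + a * I) = ∫ x : ℝ, f (x + b * I) := by
  have hrect : ∀ T : ℝ, (∫ x in -T..T, f (x + a * I)) - (∫ x in -T..T, f (x + b * I)) =
      I • (∫ y in a..b, f ((-T : ℝ) + y * I)) - I • (∫ y in a..b, f (T + y * I)) := by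
    intro T
    have hclosed : ContinuousOn f (uIcc (-T) T ×ℂ uIcc a b) := hf.continuousOn.mono fun z hz => by
      rw [Complex.closure_preimage_im, closure_Ioo hab.ne, ← uIcc_of_le hab.le]
      exact hz.2
    have hopen : DifferentiableOn ℂ f
        (Ioo (min (-T) T) (max (-T) T) ×ℂ Ioo (min a b) (max a b)) :=
      hf.differentiableOn.mono fun z hz => by
        simpa only [min_eq_left hab.le, max_eq_right hab.le] using hz.2
    have h := Complex.integral_boundary_rect_eq_zero_of_continuousOn_of_differentiableOn f
      ⟨-T, a⟩ ⟨T, b⟩ hclosed hopen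
    rw [sub_eq_zero] at h
    rw [← h, add_sub_cancel_right]
  have hhor := (intervalIntegral_tendsto_integral ha tendsto_neg_atTop_atBot tendsto_id).sub
    (intervalIntegral_tendsto_integral hb tendsto_neg_atTop_atBot tendsto_id)
  have hleft := tendsto_integral_vertical_segment hab.le hf₀
    (u := fun T => -T) (by simpa using tendsto_abs_atTop_atTop)
  have hright := tendsto_integral_vertical_segment hab.le hf₀ (u := id) tendsto_abs_atTop_atTop
  have hver := (hleft.const_smul I).sub (hright.const_smul I)
  rw [smul_zero, sub_zero] at hver
  exact sub_eq_zero.1 (tendsto_nhds_unique hhor (hver.congr fun T => (hrect T).symm))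

end Strip

section Poisson

variable {E : Type*} [NormedAddCommGroup E] [NormedSpace ℂ E] {f : ℂ → E} {M : ℝ}

/-- The quotient `(f z - f 0) / sinh z`, continued through its removable singularity at `0`.
Integrating it along the edges of a strip gives the Poisson formula. -/
noncomputable def sinhQuotient (f : ℂ → E) (z : ℂ) : E := (sinhc z)⁻¹ • dslope f 0 z

theorem sinhQuotient_of_ne_zero {z : ℂ} (hz : z ≠ 0) :
    sinhQuotient f z = (Complex.sinh z)⁻¹ • (f z - f 0) := by
  rw [sinhQuotient, sinhc_of_ne_zero hz, dslope_of_ne _ hz, slope_def_module, sub_zero,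
    smul_smul, inv_div, div_mul_eq_mul_div, mul_inv_cancel₀ hz, one_div]

theorem diffContOnCl_sinhQuotient [CompleteSpace E] {s : Set ℂ} (hs : s ∈ 𝓝 0)
    (hπ : closure s ⊆ {z | |z.im| < π}) (hf : DiffContOnCl ℂ f s) :
    DiffContOnCl ℂ (sinhQuotient f) s := by
  have hdslope : DiffContOnCl ℂ (dslope f 0) s :=
    ⟨(Complex.differentiableOn_dslope hs).2 hf.differentiableOn,
      (continuousOn_dslope (mem_of_superset hs subset_closure)).2
        ⟨hf.continuousOn, hf.differentiableAt' hs⟩⟩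
  exact (differentiable_sinhc.diffContOnCl.inv fun z hz => sinhc_ne_zero (hπ hz)).smul hdslope

theorem tendsto_sinhQuotient {s : Set ℂ} (hM : ∀ z ∈ s, ‖f z‖ ≤ M) :
    Tendsto (sinhQuotient f) (comap (fun z => |z.re|) atTop ⊓ 𝓟 s) (𝓝 0) := by
  have hlim : Tendsto (fun z : ℂ => (M + ‖f 0‖) / |z.re|)
      (comap (fun z => |z.re|) atTop ⊓ 𝓟 s) (𝓝 0) :=
    tendsto_const_nhds.div_atTop (tendsto_comap.mono_left inf_le_left)
  refine squeeze_zero_norm' ?_ hlim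
  rw [eventually_inf_principal, eventually_comap]
  filter_upwards [eventually_gt_atTop 0] with T hT z hzT hz
  have hre : 0 < |z.re| := hzT ▸ hT
  have hz₀ : z ≠ 0 := fun h => by simp [h] at hre
  calc ‖sinhQuotient f z‖ ≤ ‖f z - f 0‖ / ‖Complex.sinh z‖ := by
        rw [sinhQuotient_of_ne_zero hz₀, norm_smul, norm_inv, inv_mul_eq_div]
    _ ≤ (M + ‖f 0‖) / |z.re| := by
        gcongr
        · exact add_nonneg ((norm_nonneg _).trans (hM z hz)) (norm_nonneg _)
        · exact norm_sub_le_of_le (hM z hz) le_rfl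
        · exact abs_re_le_norm_sinh z

theorem sinhQuotient_add_pi_div_two_mul_I (t : ℝ) :
    sinhQuotient f (t + (π / 2 : ℝ) * I) =
      -(I • (Real.cosh t)⁻¹ • (f (t + (π / 2 : ℝ) * I) - f 0)) := by
  have hsinh : Complex.sinh (t + (π / 2 : ℝ) * I) = I * Real.cosh t := by
    simp [Complex.sinh_add, Complex.cosh_mul_I, Complex.sinh_mul_I, mul_comm I]
  have hne : (t : ℂ) + (π / 2 : ℝ) * I ≠ 0 := fun h => by
    simpa [pi_ne_zero] using congrArg Complex.im h
  rw [sinhQuotient_of_ne_zero hne, hsinh, mul_inv, Complex.inv_I, neg_mul, neg_smul, mul_smul,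
    ← Complex.ofReal_inv, Complex.coe_smul]

theorem sinhQuotient_add_neg_pi_div_two_mul_I (t : ℝ) :
    sinhQuotient f (t + (-(π / 2) : ℝ) * I) =
      I • (Real.cosh t)⁻¹ • (f (t + (-(π / 2) : ℝ) * I) - f 0) := by
  have hsinh : Complex.sinh (t + (-(π / 2) : ℝ) * I) = -I * Real.cosh t := by
    simp [Complex.sinh_add, Complex.cosh_mul_I, Complex.sinh_mul_I, mul_comm I]
  have hne : (t : ℂ) + (-(π / 2) : ℝ) * I ≠ 0 := fun h => by
    simpa [pi_ne_zero] using congrArg Complex.im h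
  rw [sinhQuotient_of_ne_zero hne, hsinh, mul_inv, inv_neg, Complex.inv_I, neg_neg, mul_smul,
    ← Complex.ofReal_inv, Complex.coe_smul]

theorem integrable_inv_cosh_smul_sub {b c : ℝ} (hb : 0 < b)
    (hf : DiffContOnCl ℂ f (Complex.im ⁻¹' Ioo (-b) b))
    (hM : ∀ z ∈ Complex.im ⁻¹' Icc (-b) b, ‖f z‖ ≤ M) (hc : c ∈ Icc (-b) b) (v : E) :
    Integrable fun t : ℝ => (Real.cosh t)⁻¹ • (f (t + c * I) - v) := by
  simp only [smul_sub]
  exact (integrable_inv_cosh.smul_bdd M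
    (continuous_comp_horizontal_line hf (by linarith) hc).aestronglyMeasurable
    (ae_of_all _ fun t => hM _ (by simpa using hc))).sub (integrable_inv_cosh.smul_const v)

theorem integral_inv_cosh_smul_sub_eq_neg [CompleteSpace E]
    (hf : DiffContOnCl ℂ f (Complex.im ⁻¹' Ioo (-(π / 2)) (π / 2)))
    (hM : ∀ z ∈ Complex.im ⁻¹' Icc (-(π / 2)) (π / 2), ‖f z‖ ≤ M) :
    ∫ t : ℝ, (Real.cosh t)⁻¹ • (f (t + (-(π / 2) : ℝ) * I) - f 0) =
      -∫ t : ℝ, (Real.cosh t)⁻¹ • (f (t + (π / 2 : ℝ) * I) - f 0) := by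
  have hpi : 0 < π / 2 := half_pos pi_pos
  have hstrip : Complex.im ⁻¹' Ioo (-(π / 2)) (π / 2) ∈ 𝓝 0 :=
    (isOpen_Ioo.preimage Complex.continuous_im).mem_nhds (by simpa using pi_pos)
  have hclosure : closure (Complex.im ⁻¹' Ioo (-(π / 2)) (π / 2)) ⊆ {z | |z.im| < π} := by
    rw [Complex.closure_preimage_im, closure_Ioo (by linarith)]
    exact fun z hz => (abs_le.2 hz).trans_lt (by linarith)
  have hupper := integrable_inv_cosh_smul_sub hpi hf hM (right_mem_Icc.2 (by linarith)) (f 0)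
  have hlower := integrable_inv_cosh_smul_sub hpi hf hM (left_mem_Icc.2 (by linarith)) (f 0)
  have hcauchy := integral_horizontal_line_eq (f := sinhQuotient f) (by linarith)
    (diffContOnCl_sinhQuotient hstrip hclosure hf) (tendsto_sinhQuotient hM)
    (by simpa only [sinhQuotient_add_neg_pi_div_two_mul_I] using! hlower.smul I)
    (by simpa only [sinhQuotient_add_pi_div_two_mul_I] using! (hupper.smul I).neg)
  simp only [sinhQuotient_add_neg_pi_div_two_mul_I, sinhQuotient_add_pi_div_two_mul_I] at hcauchy
  rw [integral_neg, integral_smul, integral_smul, ← smul_neg] at hcauchy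
  exact smul_right_injective E Complex.I_ne_zero hcauchy

theorem integral_inv_cosh_smul_add [CompleteSpace E]
    (hf : DiffContOnCl ℂ f (Complex.im ⁻¹' Ioo (-(π / 2)) (π / 2)))
    (hM : ∀ z ∈ Complex.im ⁻¹' Icc (-(π / 2)) (π / 2), ‖f z‖ ≤ M) :
    ∫ t : ℝ, (Real.cosh t)⁻¹ • (f (t + (π / 2 : ℝ) * I) + f (t + (-(π / 2) : ℝ) * I)) =
      (2 * π) • f 0 := by
  have hpi : 0 < π / 2 := half_pos pi_pos
  have hupper := integrable_inv_cosh_smul_sub hpi hf hM (right_mem_Icc.2 (by linarith)) (f 0)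
  have hlower := integrable_inv_cosh_smul_sub hpi hf hM (left_mem_Icc.2 (by linarith)) (f 0)
  have hconst : Integrable fun t : ℝ => (Real.cosh t)⁻¹ • (2 : ℝ) • f 0 :=
    integrable_inv_cosh.smul_const _
  calc ∫ t : ℝ, (Real.cosh t)⁻¹ • (f (t + (π / 2 : ℝ) * I) + f (t + (-(π / 2) : ℝ) * I))
      = ∫ t : ℝ, ((Real.cosh t)⁻¹ • (f (t + (π / 2 : ℝ) * I) - f 0) +
          (Real.cosh t)⁻¹ • (f (t + (-(π / 2) : ℝ) * I) - f 0) +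
          (Real.cosh t)⁻¹ • (2 : ℝ) • f 0) := by
        congr with t
        module
    _ = ∫ t : ℝ, (Real.cosh t)⁻¹ • (2 : ℝ) • f 0 := by
        rw [integral_add (by fun_prop) hconst, integral_add hupper hlower,
          integral_inv_cosh_smul_sub_eq_neg hf hM, add_neg_cancel, zero_add]
    _ = (2 * π) • f 0 := by rw [integral_smul_const, integral_inv_cosh, smul_smul, mul_comm]

theorem integral_inv_cosh_smul_sub_mul_add [CompleteSpace E] {c : ℝ} (hc : 0 < c)
    (hf : DiffContOnCl ℂ f (Complex.im ⁻¹' Ioo (-(c * (π / 2))) (c * (π / 2))))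
    (hM : ∀ z ∈ Complex.im ⁻¹' Icc (-(c * (π / 2))) (c * (π / 2)), ‖f z‖ ≤ M) (x : ℝ) :
    ∫ t : ℝ, (Real.cosh t)⁻¹ • (f (x - (c * t : ℝ) + (c * (π / 2) : ℝ) * I) +
      f (x - (c * t : ℝ) - (c * (π / 2) : ℝ) * I)) = (2 * π) • f x := by
  have him : ∀ z : ℂ, (x - c * z).im = -(c * z.im) := fun z => by simp
  have hopen : MapsTo (fun z : ℂ => x - c * z) (Complex.im ⁻¹' Ioo (-(π / 2)) (π / 2))
      (Complex.im ⁻¹' Ioo (-(c * (π / 2))) (c * (π / 2))) := fun z hz => by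
    simp only [mem_preimage, mem_Ioo, ← abs_lt, him, abs_neg, abs_mul, abs_of_pos hc] at hz ⊢
    gcongr
  have hclosed : MapsTo (fun z : ℂ => x - c * z) (Complex.im ⁻¹' Icc (-(π / 2)) (π / 2))
      (Complex.im ⁻¹' Icc (-(c * (π / 2))) (c * (π / 2))) := fun z hz => by
    simp only [mem_preimage, mem_Icc, ← abs_le, him, abs_neg, abs_mul, abs_of_pos hc] at hz ⊢
    gcongr
  have h := integral_inv_cosh_smul_add (f := fun z => f (x - c * z))
    (hf.comp (Differentiable.diffContOnCl (by fun_prop)) hopen) fun z hz => hM _ (hclosed hz)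
  rw [mul_zero, sub_zero] at h
  rw [← h]
  congr with t
  rw [add_comm (f _)]
  congr 3 <;> push_cast <;> ring

theorem integral_poisson_strip [CompleteSpace E] {b : ℝ} (hb : 0 < b)
    (hf : DiffContOnCl ℂ f (Complex.im ⁻¹' Ioo (-b) b))
    (hM : ∀ z ∈ Complex.im ⁻¹' Icc (-b) b, ‖f z‖ ≤ M) (x : ℝ) :
    ∫ t : ℝ, (4 * b * Real.cosh (π * t / (2 * b)))⁻¹ •
      (f (x - t + b * I) + f (x - t - b * I)) = f x := by
  obtain ⟨c, rfl⟩ : ∃ c, b = c * (π / 2) := ⟨b / (π / 2), by field_simp⟩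
  have hc : 0 < c := pos_of_mul_pos_left hb (by positivity)
  have hcosh : ∀ t, π * (c * t) / (2 * (c * (π / 2))) = t := fun t => by field_simp
  have hscale := Measure.integral_comp_mul_left (fun t : ℝ =>
    (4 * (c * (π / 2)) * Real.cosh (π * t / (2 * (c * (π / 2)))))⁻¹ •
      (f (x - t + (c * (π / 2) : ℝ) * I) + f (x - t - (c * (π / 2) : ℝ) * I))) c
  simp only [hcosh, mul_inv _ (Real.cosh _), mul_smul, integral_smul,
    integral_inv_cosh_smul_sub_mul_add hc hf hM x, abs_of_pos (inv_pos.2 hc)] at hscale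
  refine smul_right_injective E (inv_ne_zero hc.ne') ?_
  simp only [mul_inv _ (Real.cosh _), mul_smul, integral_smul]
  rw [← hscale, smul_smul, smul_smul]
  congr 1
  field_simp
  norm_num

end Poisson

/-- The function `coth z - 1 / z`, continued through its removable singularity at `0`.
It is what is left of `coth` when poles at `0` cancel. -/
noncomputable def cothRegularPart : ℂ → ℂ := dslope (fun z => Complex.cosh z / sinhc z) 0

theorem cothRegularPart_of_ne_zero {z : ℂ} (hz : z ≠ 0) :
    cothRegularPart z = coth z - z⁻¹ := by
  rw [cothRegularPart, dslope_of_ne _ hz, slope_def_field, sinhc_of_ne_zero hz, sinhc_zero,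
    Complex.cosh_zero, coth]
  field_simp
  ring

theorem differentiableOn_cothRegularPart :
    DifferentiableOn ℂ cothRegularPart {z | |z.im| < π} := by
  have hnhds : {z : ℂ | |z.im| < π} ∈ 𝓝 0 :=
    (isOpen_lt (by fun_prop) continuous_const).mem_nhds (by simpa using pi_pos)
  exact (Complex.differentiableOn_dslope hnhds).2 <|
    Complex.differentiable_cosh.differentiableOn.div differentiable_sinhc.differentiableOn
      fun z hz => sinhc_ne_zero hz

theorem norm_cothRegularPart_le {z : ℂ} (hz : z.re ≠ 0) :
    ‖cothRegularPart z‖ ≤ 1 + 2 * |z.re|⁻¹ := by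
  have hz₀ : z ≠ 0 := fun h => hz (by simp [h])
  have hinv : ‖z⁻¹‖ ≤ |z.re|⁻¹ := by
    rw [norm_inv]
    gcongr
    exact Complex.abs_re_le_norm z
  rw [cothRegularPart_of_ne_zero hz₀]
  linarith [norm_sub_le_of_le (norm_coth_le hz) hinv]

theorem exists_norm_cothRegularPart_le {a : ℝ} (ha : a < π) :
    ∃ M, ∀ z : ℂ, |z.im| ≤ a → ‖cothRegularPart z‖ ≤ M := by
  have hcont : ContinuousOn cothRegularPart (Icc (-1) 1 ×ℂ Icc (-a) a) :=
    differentiableOn_cothRegularPart.continuousOn.mono fun z hz => (abs_le.2 hz.2).trans_lt ha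
  obtain ⟨M, hM⟩ := (isCompact_Icc.reProdIm isCompact_Icc).exists_bound_of_continuousOn hcont
  refine ⟨max M 3, fun z hz => ?_⟩
  rcases le_or_gt |z.re| 1 with hre | hre
  · exact (hM z ⟨abs_le.1 hre, abs_le.1 hz⟩).trans (le_max_left _ _)
  · have hinv : |z.re|⁻¹ ≤ 1 := inv_le_one_of_one_le₀ hre.le
    have h := norm_cothRegularPart_le (abs_pos.1 (one_pos.trans hre))
    exact (h.trans (by linarith)).trans (le_max_right _ _)

/-- The function `coth z - β * coth (β * z)`, whose poles at `0` cancel, continued through `0`.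
Vertical shifts of it make up `liebDefect`. -/
noncomputable def cothDefect (β : ℝ) (z : ℂ) : ℂ :=
  cothRegularPart z - β * cothRegularPart (β * z)

theorem cothDefect_of_ne_zero {β : ℝ} (hβ : β ≠ 0) {z : ℂ} (hz : z ≠ 0) :
    cothDefect β z = coth z - β * coth (β * z) := by
  have hβ' : (β : ℂ) ≠ 0 := Complex.ofReal_ne_zero.2 hβ
  rw [cothDefect, cothRegularPart_of_ne_zero hz, cothRegularPart_of_ne_zero (mul_ne_zero hβ' hz)]
  field_simp
  ring

theorem cothDefect_sub_mul_I_sub_cothDefect_add_mul_I {β a : ℝ} (hβ : β ≠ 0) (ha : a ≠ 0)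
    (x : ℝ) :
    cothDefect β (x - a * I) - cothDefect β (x + a * I) =
      coth (x - a * I) - coth (x + a * I) -
        β * (coth ((β * x : ℝ) - (β * a : ℝ) * I) - coth ((β * x : ℝ) + (β * a : ℝ) * I)) := by
  have hsub : (x : ℂ) - a * I ≠ 0 := fun h => ha (by simpa using congrArg Complex.im h)
  have hadd : (x : ℂ) + a * I ≠ 0 := fun h => ha (by simpa using congrArg Complex.im h)
  rw [cothDefect_of_ne_zero hβ hsub, cothDefect_of_ne_zero hβ hadd]
  push_cast
  rw [mul_sub (β : ℂ) (x : ℂ), mul_add (β : ℂ) (x : ℂ), ← mul_assoc]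
  ring

theorem abs_im_ofReal_mul_le {β a : ℝ} {z : ℂ} (hz : |z.im| ≤ a) :
    |((β : ℂ) * z).im| ≤ |β| * a := by
  rw [Complex.im_ofReal_mul, abs_mul]
  gcongr

theorem differentiableOn_cothDefect {β a : ℝ} (ha : a < π) (hβa : |β| * a < π) :
    DifferentiableOn ℂ (cothDefect β) {z | |z.im| ≤ a} :=
  (differentiableOn_cothRegularPart.mono fun _ hz => hz.out.trans_lt ha).sub <|
    (differentiableOn_cothRegularPart.comp (by fun_prop) fun _ hz =>
      (abs_im_ofReal_mul_le hz).trans_lt hβa).const_mul _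

theorem exists_norm_cothDefect_le {β a : ℝ} (ha : a < π) (hβa : |β| * a < π) :
    ∃ M, ∀ z : ℂ, |z.im| ≤ a → ‖cothDefect β z‖ ≤ M := by
  obtain ⟨M₁, hM₁⟩ := exists_norm_cothRegularPart_le ha
  obtain ⟨M₂, hM₂⟩ := exists_norm_cothRegularPart_le hβa
  refine ⟨M₁ + |β| * M₂, fun z hz => norm_sub_le_of_le (hM₁ z hz) ?_⟩
  rw [norm_mul, Complex.norm_real, Real.norm_eq_abs]
  gcongr
  exact hM₂ _ (abs_im_ofReal_mul_le hz)

/-- The holomorphic extension to the strip `|im z| ≤ ζ / 2` of the difference of the source term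
and the solution `ρ` of the Lieb equation, to which the Poisson formula is applied. -/
noncomputable def liebDefect (ζ : ℝ) (z : ℂ) : ℂ :=
  (π * I)⁻¹ * (cothDefect (π / (2 * ζ)) (z - (ζ / 2 : ℝ) * I) -
    cothDefect (π / (2 * ζ)) (z + (ζ / 2 : ℝ) * I))

theorem inv_pi_mul_I_mul_I_mul (r : ℝ) : ((π : ℂ) * I)⁻¹ * (I * r) = ((π⁻¹ * r : ℝ) : ℂ) := by
  rw [mul_inv, mul_assoc, inv_mul_cancel_left₀ Complex.I_ne_zero, Complex.ofReal_mul,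
    Complex.ofReal_inv]

theorem liebDefect_ofReal {ζ : ℝ} (hζ : ζ ∈ Ioo 0 π) (x : ℝ) :
    liebDefect ζ x = ((Real.sin ζ / (π * (Real.sinh x ^ 2 + Real.sin (ζ / 2) ^ 2)) -
      1 / (ζ * Real.cosh (π * x / ζ)) : ℝ) : ℂ) := by
  have hζ₀ : ζ ≠ 0 := hζ.1.ne'
  have hsin : Real.sin (ζ / 2) ≠ 0 :=
    (sin_pos_of_pos_of_lt_pi (by linarith [hζ.1]) (by linarith [hζ.1, hζ.2])).ne'
  have hquarter : π / (2 * ζ) * (ζ / 2) = π / 4 := by field_simp; norm_num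
  have hcosh : 2 * (π / (2 * ζ) * x) = π * x / ζ := by field_simp
  rw [liebDefect, cothDefect_sub_mul_I_sub_cothDefect_add_mul_I (by positivity) (by positivity),
    hquarter, coth_sub_pi_div_four_mul_I_sub_coth_add_pi_div_four_mul_I,
    coth_sub_mul_I_sub_coth_add_mul_I x hsin, hcosh, mul_div_cancel₀ ζ two_ne_zero,
    mul_left_comm, ← mul_sub, ← Complex.ofReal_mul, ← Complex.ofReal_sub, inv_pi_mul_I_mul_I_mul]
  congr 1
  field_simp

theorem liebDefect_add_mul_I_add_liebDefect_sub_mul_I {ζ : ℝ} (hζ : ζ ∈ Ioo 0 π) (x : ℝ) :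
    liebDefect ζ (x + (ζ / 2 : ℝ) * I) + liebDefect ζ (x - (ζ / 2 : ℝ) * I) =
      ((Real.sin (2 * ζ) / (π * (Real.sinh x ^ 2 + Real.sin ζ ^ 2)) : ℝ) : ℂ) := by
  have hζ₀ : ζ ≠ 0 := hζ.1.ne'
  have hhalf : π / (2 * ζ) * ζ = π / 2 := by field_simp
  have hζI : (ζ / 2 : ℝ) * I + (ζ / 2 : ℝ) * I = ζ * I := by push_cast; ring
  have hsum : liebDefect ζ (x + (ζ / 2 : ℝ) * I) + liebDefect ζ (x - (ζ / 2 : ℝ) * I) =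
      (π * I)⁻¹ * (cothDefect (π / (2 * ζ)) (x - ζ * I) -
        cothDefect (π / (2 * ζ)) (x + ζ * I)) := by
    rw [liebDefect, liebDefect, add_sub_cancel_right, sub_add_cancel, add_assoc, sub_sub, hζI]
    ring
  rw [hsum, cothDefect_sub_mul_I_sub_cothDefect_add_mul_I (by positivity) hζ₀, hhalf,
    coth_sub_pi_div_two_mul_I, sub_self, mul_zero, sub_zero,
    coth_sub_mul_I_sub_coth_add_mul_I x (sin_pos_of_mem_Ioo hζ).ne', inv_pi_mul_I_mul_I_mul,
    inv_mul_eq_div, div_div, mul_comm π]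

theorem abs_pi_div_two_mul_mul_self_lt_pi {ζ : ℝ} (hζ : 0 < ζ) : |π / (2 * ζ)| * ζ < π := by
  rw [abs_of_pos (by positivity), show π / (2 * ζ) * ζ = π / 2 by field_simp]
  exact half_lt_self pi_pos

theorem mapsTo_sub_half_mul_I (a : ℝ) :
    MapsTo (fun z => z - (a / 2 : ℝ) * I) (Complex.im ⁻¹' Icc (-(a / 2)) (a / 2))
      {z | |z.im| ≤ a} := fun z hz => by
  have him : (z - (a / 2 : ℝ) * I).im = z.im - a / 2 := by simp
  rw [mem_ofPred_eq, him, abs_le]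
  constructor <;> linarith [hz.1, hz.2]

theorem mapsTo_add_half_mul_I (a : ℝ) :
    MapsTo (fun z => z + (a / 2 : ℝ) * I) (Complex.im ⁻¹' Icc (-(a / 2)) (a / 2))
      {z | |z.im| ≤ a} := fun z hz => by
  have him : (z + (a / 2 : ℝ) * I).im = z.im + a / 2 := by simp
  rw [mem_ofPred_eq, him, abs_le]
  constructor <;> linarith [hz.1, hz.2]

theorem diffContOnCl_liebDefect {ζ : ℝ} (hζ : ζ ∈ Ioo 0 π) :
    DiffContOnCl ℂ (liebDefect ζ) (Complex.im ⁻¹' Ioo (-(ζ / 2)) (ζ / 2)) := by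
  have hdiff := differentiableOn_cothDefect hζ.2 (abs_pi_div_two_mul_mul_self_lt_pi hζ.1)
  apply DifferentiableOn.diffContOnCl
  rw [Complex.closure_preimage_im, closure_Ioo (by linarith [hζ.1])]
  exact ((hdiff.comp (by fun_prop) (mapsTo_sub_half_mul_I ζ)).sub
    (hdiff.comp (by fun_prop) (mapsTo_add_half_mul_I ζ))).const_mul _

theorem exists_norm_liebDefect_le {ζ : ℝ} (hζ : ζ ∈ Ioo 0 π) :
    ∃ M, ∀ z ∈ Complex.im ⁻¹' Icc (-(ζ / 2)) (ζ / 2), ‖liebDefect ζ z‖ ≤ M := by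
  obtain ⟨M, hM⟩ := exists_norm_cothDefect_le hζ.2 (abs_pi_div_two_mul_mul_self_lt_pi hζ.1)
  refine ⟨‖((π : ℂ) * I)⁻¹‖ * (M + M), fun z hz => ?_⟩
  rw [liebDefect, norm_mul]
  gcongr
  exact norm_sub_le_of_le (hM _ (mapsTo_sub_half_mul_I ζ hz)) (hM _ (mapsTo_add_half_mul_I ζ hz))

/-- The function `ρ(λ) = 1/(ζ cosh(πλ/ζ))` solves the Lieb integral equation of the
massless XXZ chain, written here in purely real form:
`sin ζ/(π(sinh²λ + sin²(ζ/2))) = ρ(λ) + ∫_ℝ K(λ−μ) ρ(μ) dμ` with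
`K(λ) = sin(2ζ)/(2π(sinh²λ + sin²ζ))`. -/
theorem lieb_equation_solution (ζ : ℝ) (hζ : ζ ∈ Set.Ioo 0 π) (lam : ℝ) :
    Real.sin ζ / (π * (Real.sinh lam ^ 2 + Real.sin (ζ / 2) ^ 2)) =
      1 / (ζ * Real.cosh (π * lam / ζ)) +
      ∫ μ : ℝ,
        (Real.sin (2 * ζ) / (2 * π * (Real.sinh (lam - μ) ^ 2 + Real.sin ζ ^ 2))) *
          (1 / (ζ * Real.cosh (π * μ / ζ))) := by
  obtain ⟨M, hM⟩ := exists_norm_liebDefect_le hζ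
  have hpoisson := integral_poisson_strip (half_pos hζ.1) (diffContOnCl_liebDefect hζ) hM lam
  simp only [← Complex.ofReal_sub, liebDefect_add_mul_I_add_liebDefect_sub_mul_I hζ,
    liebDefect_ofReal hζ, Complex.real_smul, ← Complex.ofReal_mul, integral_complex_ofReal,
    Complex.ofReal_inj] at hpoisson
  rw [← sub_eq_iff_eq_add', ← hpoisson]
  congr with μ
  rw [mul_div_cancel₀ ζ two_ne_zero]
  field_simp
  norm_num
end

section
/- Let m ≥ 1 and 0 ≤ s ≤ m, and let w : ℝ → ℝ be Lebesgue integrable and supported on [−1,1]. Suppose Π_0, Π_1, ..., Π_{m−1} are monic real polynomials with deg Π_k = k satisfying the orthogonality relations ∫_{−1}^{1} Π_k(x)·x^j·w(x) dx = 0 for all 0 ≤ j < k ≤ m−1. Let L_1, ..., L_s : ℝ[X] → ℝ be linear maps. Define the m×m real matrix R̃ by R̃_{jk} = ∫_{−1}^{1} x^{j+k−2} w(x) dx for 1 ≤ j ≤ m−s and 1 ≤ k ≤ m, and R̃_{m−s+t, k} = L_t(X^{k−1}) for 1 ≤ t ≤ s and 1 ≤ k ≤ m. Let H be the (m−s)×(m−s)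 Hankel matrix H_{jk} = ∫_{−1}^{1} x^{j+k−2} w(x) dx. Then det R̃ = det H · det_s[ L_t( Π_{m−s+k−1} ) ]_{1≤t,k≤s}. -/
open MeasureTheory Polynomial

/-!
Rows of linear functionals are evaluated on monomials, so replacing the monomials in the columns by
monic polynomials of the same degrees is multiplication by a unitriangular matrix and preserves the
determinant. Keep the monomials in the first `m - s` columns and put orthogonal polynomials in the
last `s`: the moment rows vanish there, and the matrix becomes block lower triangular.
-/

theorem linearMap_apply_eq_sum_fin {A M : Type*} [Semiring A] [AddCommMonoid M] [Module A M]
    (F : A[X] →ₗ[A] M) {m : ℕ} {p : A[X]} (hp : p.natDegree < m) :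
    F p = ∑ i : Fin m, p.coeff i • F (X ^ (i : ℕ)) := by
  conv_lhs => rw [p.as_sum_range_C_mul_X_pow' hp, Finset.sum_range, map_sum]
  simp only [← smul_eq_C_mul, map_smul]

section FunctionalDeterminants

variable {A : Type*} [CommRing A]

theorem det_apply_monic_eq_det_apply_X_pow {m : ℕ} (F : Fin m → (A[X] →ₗ[A] A))
    (Q : Fin m → A[X]) (hmonic : ∀ k, (Q k).Monic)
    (hdeg : ∀ k, (Q k).natDegree = (k : ℕ)) :
    Matrix.det (Matrix.of fun j k => F j (Q k)) =
      Matrix.det (Matrix.of fun j k : Fin m => F j (X ^ (k : ℕ))) := by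
  have hmul : (Matrix.of fun j k => F j (Q k)) =
      (Matrix.of fun j k : Fin m => F j (X ^ (k : ℕ))) *
        Matrix.of fun i k : Fin m => (Q k).coeff i := by
    ext j k
    simp only [Matrix.mul_apply, Matrix.of_apply, mul_comm (F j _), ← smul_eq_mul]
    exact linearMap_apply_eq_sum_fin (F j) ((hdeg k).trans_lt k.isLt)
  rw [hmul, Matrix.det_mul, Matrix.det_matrixOfPolynomials Q hdeg hmonic, mul_one]

theorem det_append_apply_X_pow_eq_mul {n s : ℕ} (F : Fin n → (A[X] →ₗ[A] A))
    (L : Fin s → (A[X] →ₗ[A] A)) (P : Fin s → A[X]) (hmonic : ∀ k, (P k).Monic)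
    (hdeg : ∀ k, (P k).natDegree = n + (k : ℕ)) (hzero : ∀ j k, F j (P k) = 0) :
    Matrix.det (Matrix.of fun j k : Fin (n + s) => Fin.append F L j (X ^ (k : ℕ))) =
      Matrix.det (Matrix.of fun j k : Fin n => F j (X ^ (k : ℕ))) *
        Matrix.det (Matrix.of fun t k : Fin s => L t (P k)) := by
  -- Over the trivial ring `X ^ k` would not have degree `k`.
  nontriviality A
  let Q : Fin (n + s) → A[X] := Fin.append (fun k : Fin n => X ^ (k : ℕ)) P
  have hQmonic : ∀ k, (Q k).Monic :=
    Fin.addCases (by simp [Q, monic_X_pow]) (by simpa [Q] using hmonic)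
  have hQdeg : ∀ k, (Q k).natDegree = (k : ℕ) :=
    Fin.addCases (by simp [Q]) (by simpa [Q] using hdeg)
  have hblocks : (Matrix.of fun j k => Fin.append F L j (Q k)).submatrix
        finSumFinEquiv finSumFinEquiv =
      Matrix.fromBlocks (Matrix.of fun j k : Fin n => F j (X ^ (k : ℕ))) 0
        (Matrix.of fun (t : Fin s) (k : Fin n) => L t (X ^ (k : ℕ)))
        (Matrix.of fun t k : Fin s => L t (P k)) := by
    ext (i | i) (k | k) <;> simp [Q, hzero]
  rw [← det_apply_monic_eq_det_apply_X_pow _ Q hQmonic hQdeg,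
    ← Matrix.det_submatrix_equiv_self finSumFinEquiv, hblocks, Matrix.det_fromBlocks_zero₁₂]

theorem det_modified_hankel_factorization_general {n s m : ℕ} (hm : n + s = m)
    (ℓ : A[X] →ₗ[A] A) (P : Fin s → A[X]) (hmonic : ∀ k, (P k).Monic)
    (hdeg : ∀ k, (P k).natDegree = n + (k : ℕ))
    (horth : ∀ k, ∀ j < n, ℓ (P k * X ^ j) = 0)
    (L : Fin s → (A[X] →ₗ[A] A)) (R : Matrix (Fin m) (Fin m) A)
    (hRmoment : ∀ j k : Fin m, (j : ℕ) < n → R j k = ℓ (X ^ ((j : ℕ) + (k : ℕ))))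
    (hRfunc : ∀ (t : Fin s) (k : Fin m), R ⟨n + (t : ℕ), by omega⟩ k = L t (X ^ (k : ℕ))) :
    R.det = Matrix.det (Matrix.of fun j k : Fin n => ℓ (X ^ ((j : ℕ) + (k : ℕ)))) *
      Matrix.det (Matrix.of fun t k : Fin s => L t (P k)) := by
  subst hm
  let F : Fin n → (A[X] →ₗ[A] A) := fun j => ℓ ∘ₗ LinearMap.mulRight A (X ^ (j : ℕ))
  have hF (j : Fin n) (k : ℕ) : F j (X ^ k) = ℓ (X ^ ((j : ℕ) + k)) := by
    simp only [F, LinearMap.comp_apply, LinearMap.mulRight_apply, ← pow_add, add_comm]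
  have hR : R = Matrix.of fun j k : Fin (n + s) => Fin.append F L j (X ^ (k : ℕ)) := by
    ext j k
    cases j using Fin.addCases with
    | left j => simpa [hF] using hRmoment (Fin.castAdd s j) k j.isLt
    | right t =>
      rw [Matrix.of_apply, Fin.append_right]
      exact hRfunc t k
  simp only [hR, ← hF]
  exact det_append_apply_X_pow_eq_mul F L P hmonic hdeg fun j k => horth k j j.isLt

end FunctionalDeterminants

/-- The moment functional `p ↦ ∫ x in a..b, p(x) w(x)` of a weight `w`, which expresses moments
and orthogonality for `w` in terms of a linear functional on polynomials. Interval integrability of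
`w` is an argument because additivity in `p` can fail for junk integrals. -/
noncomputable def momentFunctional {a b : ℝ} {w : ℝ → ℝ}
    (hw : IntervalIntegrable w volume a b) : ℝ[X] →ₗ[ℝ] ℝ where
  toFun p := ∫ x in a..b, p.eval x * w x
  map_add' p q := by
    simp only [eval_add, add_mul]
    exact intervalIntegral.integral_add (hw.continuousOn_mul p.continuousOn)
      (hw.continuousOn_mul q.continuousOn)
  map_smul' c p := by
    simp only [eval_smul, smul_eq_mul, RingHom.id_apply, mul_assoc,
      intervalIntegral.integral_const_mul]

theorem momentFunctional_apply {a b : ℝ} {w : ℝ → ℝ} (hw : IntervalIntegrable w volume a b)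
    (p : ℝ[X]) : momentFunctional hw p = ∫ x in a..b, p.eval x * w x :=
  rfl

/-- Separation of the "pole part" from the pure Hankel part: let `w` be integrable with
support in `[−1,1]`, let `Π_0, …, Π_{m−1}` be the monic orthogonal polynomials for `w`,
and let `L_1, …, L_s` be linear functionals on `ℝ[X]`. If the `m×m` matrix `R̃` has
moment rows `R̃_{jk} = ∫_{−1}^1 x^{j+k−2} w(x) dx` for `1 ≤ j ≤ m−s` and functional rows
`R̃_{m−s+t,k} = L_t(X^{k−1})` for `1 ≤ t ≤ s`, then
`det R̃ = det H · det_s [L_t(Π_{m−s+k−1})]`, where `H` is the `(m−s)×(m−s)` Hankel matrix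
of moments of `w`. -/
theorem det_modified_hankel_factorization (m s : ℕ) (hm : 1 ≤ m) (hs : s ≤ m)
    (w : ℝ → ℝ) (hw : Integrable w)
    (hsupp : Function.support w ⊆ Set.Icc (-1 : ℝ) 1)
    (P : Fin m → Polynomial ℝ)
    (hmonic : ∀ k : Fin m, (P k).Monic)
    (hdeg : ∀ k : Fin m, (P k).natDegree = (k : ℕ))
    (horth : ∀ k : Fin m, ∀ j : ℕ, j < (k : ℕ) →
      (∫ x in (-1 : ℝ)..1, (P k).eval x * x ^ j * w x) = 0)
    (L : Fin s → (Polynomial ℝ →ₗ[ℝ] ℝ))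
    (R : Matrix (Fin m) (Fin m) ℝ)
    (hRmoment : ∀ j k : Fin m, (j : ℕ) < m - s →
      R j k = ∫ x in (-1 : ℝ)..1, x ^ ((j : ℕ) + (k : ℕ)) * w x)
    (hRfunc : ∀ (t : Fin s) (k : Fin m),
      R ⟨m - s + (t : ℕ), by omega⟩ k = L t (Polynomial.X ^ (k : ℕ))) :
    Matrix.det R =
      Matrix.det (Matrix.of fun j k : Fin (m - s) =>
          ∫ x in (-1 : ℝ)..1, x ^ ((j : ℕ) + (k : ℕ)) * w x) *
        Matrix.det (Matrix.of fun t k : Fin s =>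
          L t (P ⟨m - s + (k : ℕ), by omega⟩)) := by
  simpa only [momentFunctional_apply, eval_mul, eval_pow, eval_X] using
    det_modified_hankel_factorization_general (Nat.sub_add_cancel hs)
      (momentFunctional hw.intervalIntegrable) (fun k => P ⟨m - s + (k : ℕ), by omega⟩)
      (fun _ => hmonic _) (fun _ => hdeg _)
      (fun k j hj => by
        simpa only [momentFunctional_apply, eval_mul, eval_pow, eval_X] using
          horth ⟨m - s + (k : ℕ), by omega⟩ j (hj.trans_le (Nat.le_add_right _ _)))
      L R (by simpa only [momentFunctional_apply, eval_pow, eval_X] using hRmoment) hRfunc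
end
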